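/- arXiv:1806.02456 — 3 statements merged into one kernel-verified Lean document; each statement's English description precedes it below -/
import Mathlib

section
/- Let u be a minimizer of the energy E, let U ⊆ I be an open interval and p ∈ [1, ∞). Suppose f is absolutely continuous on U in the integral sense: there is a locally integrable g : U → ℝⁿ with f(y) − f(x) = ∫_x^y g for all x, y ∈ U, and suppose ∫_U ‖g‖^p < ∞. Then there is a function ū equal to u almost everywhere and a locally integrable h : U → ℝⁿ with ū(y) − ū(x) = ∫_x^y h for all x, y ∈ U, satisfying ‖h(x)‖ ≤ ‖g(x)‖ for almost every x ∈ U; in particular ∫_U ‖h‖^p ≤ ∫_U ‖g‖^p. -/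
open MeasureTheory Set Filter
open scoped ENNReal

noncomputable section

/-- Square-integrability of `w` on the set `S`. -/
def SqIntOn {n : ℕ} (w : ℝ → EuclideanSpace ℝ (Fin n)) (S : Set ℝ) : Prop :=
  MeasureTheory.IntegrableOn (fun x => ‖w x‖ ^ 2) S

/-- The Rudin–Osher–Fatemi energy with fidelity weight `1/(2 lam)`, datum `f`,
on the interval `I = Ioo a b`. -/
def rofEnergy {n : ℕ} (lam a b : ℝ) (f w : ℝ → EuclideanSpace ℝ (Fin n)) : ℝ≥0∞ :=
  eVariationOn w (Set.Ioo a b) +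
    ENNReal.ofReal ((1 / (2 * lam)) * ∫ x in Set.Ioo a b, ‖w x - f x‖ ^ 2)

/-- `u` is a minimizer of the ROF energy among Borel measurable functions
square-integrable on `Ioo a b`. -/
def IsMinimizer {n : ℕ} (lam a b : ℝ) (f u : ℝ → EuclideanSpace ℝ (Fin n)) : Prop :=
  Measurable u ∧ SqIntOn u (Set.Ioo a b) ∧
    ∀ w : ℝ → EuclideanSpace ℝ (Fin n), Measurable w → SqIntOn w (Set.Ioo a b) →
      rofEnergy lam a b f u ≤ rofEnergy lam a b f w

/-!
Put `q = (f - u) / λ` on `I = (a, b)`. Minimality makes `q` a subgradient of the total variation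
at `u`. Testing this against a jump at `x`, and against the perturbation that collapses `u` on
`[x, y]`, shows that `z x = ∫ t in x..b, q t` calibrates `u`: `‖z‖ ≤ 1`, `z' = -q`, and the
variation of `u` on `[x, y]` is at most `∫ ⟪z, dDu⟫`. Consequently `u` is constant on intervals on
which `‖z‖ < 1`. Since `u + λ q = f` has density `g`, integration by parts bounds the variation of
`u` on `[x, y]` by `∫ ‖g‖ + λ ⟪z x, q x⟫ - λ ⟪z y, q y⟫`.

The derivative of `‖z‖²` is `-2 ⟪z, q⟫`, so just before a contact point `‖z‖ = 1` there are points
with `⟪z, q⟫ ≤ 0` and just after it points with `⟪z, q⟫ ≥ 0`. Choosing such points next to the first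
and the last contact point of `[x, y]` makes the boundary terms harmless, and letting them converge
gives `‖u y - u x‖ ≤ ∫ t in x..y, ‖g t‖`: hence `u` is absolutely continuous with `‖u'‖ ≤ ‖g‖`.
-/

section Primitive

open Topology

variable {E : Type*} [NormedAddCommGroup E] {x y : ℝ}

theorem absolutelyContinuousOnInterval_of_norm_sub_le_integral {u : ℝ → E} {φ : ℝ → ℝ}
    (hφ : IntervalIntegrable φ volume x y)
    (hu : ∀ s ∈ uIcc x y, ∀ t ∈ uIcc x y, s ≤ t → ‖u t - u s‖ ≤ ∫ r in s..t, φ r) :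
    AbsolutelyContinuousOnInterval u x y := by
  have hdist : ∀ s ∈ uIcc x y, ∀ t ∈ uIcc x y,
      dist (u s) (u t) ≤ dist (∫ r in x..s, φ r) (∫ r in x..t, φ r) := by
    have hint : ∀ s ∈ uIcc x y, IntervalIntegrable φ volume x s := fun s hs ↦
      hφ.mono_set (uIcc_subset_uIcc_left hs)
    intro s hs t ht
    wlog hst : s ≤ t generalizing s t
    · rw [dist_comm (u s), dist_comm (∫ r in x..s, φ r)]
      exact this t ht s hs (le_of_not_ge hst)
    rw [dist_comm, dist_eq_norm, dist_comm, Real.dist_eq,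
      intervalIntegral.integral_interval_sub_left (hint t ht) (hint s hs)]
    exact (hu s hs t ht hst).trans (le_abs_self _)
  refine squeeze_zero' (.of_forall fun _ ↦ Finset.sum_nonneg fun _ _ ↦ dist_nonneg) ?_
    (hφ.absolutelyContinuousOnInterval_intervalIntegral (c := x) left_mem_uIcc)
  filter_upwards [mem_inf_of_right (mem_principal_self _)] with I hI
  exact Finset.sum_le_sum fun i hi ↦ hdist _ (hI.1 i hi).1 _ (hI.1 i hi).2

theorem intervalIntegrable_of_locallyIntegrableOn {f : ℝ → E} {s : Set ℝ} [OrdConnected s]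
    (hf : LocallyIntegrableOn f s) (hx : x ∈ s) (hy : y ∈ s) :
    IntervalIntegrable f volume x y :=
  (intervalIntegrable_iff').2
    (hf.integrableOn_compact_subset (OrdConnected.uIcc_subset ‹_› hx hy) isCompact_uIcc)

variable [NormedSpace ℝ E]

theorem absolutelyContinuousOnInterval_intervalIntegral {f : ℝ → E}
    (hf : IntervalIntegrable f volume x y) :
    AbsolutelyContinuousOnInterval (fun t ↦ ∫ r in x..t, f r) x y := by
  refine absolutelyContinuousOnInterval_of_norm_sub_le_integral hf.norm fun s hs t ht hst ↦ ?_
  rw [intervalIntegral.integral_interval_sub_left (hf.mono_set (uIcc_subset_uIcc_left ht))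
    (hf.mono_set (uIcc_subset_uIcc_left hs))]
  exact intervalIntegral.norm_integral_le_integral_norm hst

theorem sub_eq_integral_of_absolutelyContinuousOnInterval [CompleteSpace E] {F f : ℝ → E}
    (hF : AbsolutelyContinuousOnInterval F x y) (hf : IntervalIntegrable f volume x y)
    (hderiv : ∀ᵐ t, t ∈ uIcc x y → HasDerivAt F (f t) t) :
    F y - F x = ∫ t in x..y, f t := by
  obtain ⟨C, hC⟩ := (hF.sub (absolutelyContinuousOnInterval_intervalIntegral hf)
    ).const_of_ae_hasDerivAt_zero (by
      filter_upwards [hderiv, hf.ae_hasDerivAt_integral] with t hFt hft ht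
      simpa using (hFt ht).sub (hft ht x left_mem_uIcc))
  have hx : F x = C := by simpa using hC x left_mem_uIcc
  have hy : F y - ∫ t in x..y, f t = C := hC y right_mem_uIcc
  rw [hx, ← hy, sub_sub_cancel]

/-- `F` is a primitive of `f` on `s`: the density `f` is locally integrable on `s` and the
increments of `F` are the integrals of `f`. On an interval `s` this is local absolute continuity
of `F` with derivative `f`. -/
structure IsPrimitiveOn (F f : ℝ → E) (s : Set ℝ) : Prop where
  locallyIntegrableOn : LocallyIntegrableOn f s
  sub_eq_integral : ∀ x ∈ s, ∀ y ∈ s, F y - F x = ∫ t in x..y, f t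

namespace IsPrimitiveOn

variable {F f : ℝ → E} {s t : Set ℝ}

theorem mono (h : IsPrimitiveOn F f s) (hts : t ⊆ s) : IsPrimitiveOn F f t where
  locallyIntegrableOn := h.locallyIntegrableOn.mono_set hts
  sub_eq_integral x hx y hy := h.sub_eq_integral x (hts hx) y (hts hy)

theorem norm_sub_le (h : IsPrimitiveOn F f s) (hx : x ∈ s) (hy : y ∈ s) (hxy : x ≤ y) :
    ‖F y - F x‖ ≤ ∫ t in x..y, ‖f t‖ := by
  rw [h.sub_eq_integral x hx y hy]
  exact intervalIntegral.norm_integral_le_integral_norm hxy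

theorem intervalIntegral_of_locallyIntegrableOn [OrdConnected s] {c : ℝ} (hc : c ∈ s)
    (hf : LocallyIntegrableOn f s) : IsPrimitiveOn (fun x ↦ ∫ t in c..x, f t) f s where
  locallyIntegrableOn := hf
  sub_eq_integral _ hx _ hy := intervalIntegral.integral_interval_sub_left
    (intervalIntegrable_of_locallyIntegrableOn hf hc hy)
    (intervalIntegrable_of_locallyIntegrableOn hf hc hx)

variable [OrdConnected s]

theorem intervalIntegrable (h : IsPrimitiveOn F f s) (hx : x ∈ s) (hy : y ∈ s) :
    IntervalIntegrable f volume x y :=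
  intervalIntegrable_of_locallyIntegrableOn h.locallyIntegrableOn hx hy

theorem absolutelyContinuousOnInterval (h : IsPrimitiveOn F f s) (hx : x ∈ s) (hy : y ∈ s) :
    AbsolutelyContinuousOnInterval F x y :=
  have hsub : uIcc x y ⊆ s := OrdConnected.uIcc_subset ‹_› hx hy
  absolutelyContinuousOnInterval_of_norm_sub_le_integral (h.intervalIntegrable hx hy).norm
    fun _ hr _ ht hrt ↦ h.norm_sub_le (hsub hr) (hsub ht) hrt

theorem continuousOn_uIcc (h : IsPrimitiveOn F f s) (hx : x ∈ s) (hy : y ∈ s) :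
    ContinuousOn F (uIcc x y) :=
  (h.absolutelyContinuousOnInterval hx hy).continuousOn

theorem continuousAt (h : IsPrimitiveOn F f s) (hs : IsOpen s) (hx : x ∈ s) :
    ContinuousAt F x := by
  obtain ⟨l, r, hmem, hsub⟩ := mem_nhds_iff_exists_Ioo_subset.1 (hs.mem_nhds hx)
  obtain ⟨l', hl, hl'⟩ := exists_between hmem.1
  obtain ⟨r', hr, hr'⟩ := exists_between hmem.2
  refine (h.continuousOn_uIcc (hsub ⟨hl, hl'.trans hmem.2⟩)
    (hsub ⟨hmem.1.trans hr, hr'⟩)).continuousAt ?_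
  rw [uIcc_of_le (hl'.trans hr).le]
  exact Icc_mem_nhds hl' hr

theorem ae_hasDerivAt [CompleteSpace E] (h : IsPrimitiveOn F f s) :
    ∀ᵐ t, t ∈ s → HasDerivAt F (f t) t := by
  refine ae_of_mem_of_ae_of_mem_inter_Ioo fun c d hc hd hcd ↦ ?_
  filter_upwards [(h.intervalIntegrable hc hd).ae_hasDerivAt_integral] with t ht htcd
  rw [uIcc_of_le hcd.le] at ht
  refine ((ht (Ioo_subset_Icc_self htcd.2) c (left_mem_Icc.2 hcd.le)).const_add
    (F c)).congr_of_eventuallyEq ?_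
  filter_upwards [Ioo_mem_nhds htcd.2.1 htcd.2.2] with r hr
  rw [← h.sub_eq_integral c hc r (Set.Icc_subset s hc hd (Ioo_subset_Icc_self hr)), add_sub_cancel]

end IsPrimitiveOn

theorem le_integral_of_forall_lt_of_forall_gt {φ : ℝ → ℝ} {s : Set ℝ} [OrdConnected s]
    (hs : IsOpen s) (hφ : LocallyIntegrableOn φ s) {K : ℝ} (hx : x ∈ s) (hy : y ∈ s)
    (hK : ∀ x' ∈ s, x' < x → ∀ y' ∈ s, y < y' → K ≤ ∫ t in x'..y', φ t) :
    K ≤ ∫ t in x..y, φ t := by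
  have hΦ := IsPrimitiveOn.intervalIntegral_of_locallyIntegrableOn hx hφ
  rw [← hΦ.sub_eq_integral x hx y hy]
  have hlim : Tendsto (fun p : ℝ × ℝ ↦ (∫ t in x..p.2, φ t) - ∫ t in x..p.1, φ t)
      (𝓝[<] x ×ˢ 𝓝[>] y) (𝓝 ((∫ t in x..y, φ t) - ∫ t in x..x, φ t)) :=
    ((hΦ.continuousAt hs hy).tendsto.mono_left nhdsWithin_le_nhds |>.comp tendsto_snd).sub
      ((hΦ.continuousAt hs hx).tendsto.mono_left nhdsWithin_le_nhds |>.comp tendsto_fst)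
  refine ge_of_tendsto hlim ?_
  have hx' : ∀ᶠ x' in 𝓝[<] x, x' ∈ s ∧ x' < x :=
    (eventually_nhdsWithin_of_eventually_nhds (hs.mem_nhds hx)).and self_mem_nhdsWithin
  have hy' : ∀ᶠ y' in 𝓝[>] y, y' ∈ s ∧ y < y' :=
    (eventually_nhdsWithin_of_eventually_nhds (hs.mem_nhds hy)).and self_mem_nhdsWithin
  filter_upwards [hx'.prod_mk hy'] with p ⟨⟨h1, h2⟩, h3, h4⟩
  rw [hΦ.sub_eq_integral _ h1 _ h3]
  exact hK _ h1 h2 _ h3 h4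

theorem norm_le_of_hasDerivWithinAt_Ioi_of_norm_sub_le {u : ℝ → E} {G : ℝ → ℝ} {u' : E}
    {G' t : ℝ} (hu : HasDerivWithinAt u u' (Ioi t) t) (hG : HasDerivWithinAt G G' (Ioi t) t)
    (h : ∀ᶠ r in 𝓝[>] t, ‖u r - u t‖ ≤ G r - G t) : ‖u'‖ ≤ G' := by
  rw [hasDerivWithinAt_iff_tendsto_slope' self_notMem_Ioi] at hu hG
  refine le_of_tendsto_of_tendsto hu.norm hG ?_
  filter_upwards [h, self_mem_nhdsWithin] with r hr htr
  have hpos : 0 < r - t := sub_pos.2 htr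
  simpa [slope, norm_smul, abs_of_pos hpos] using
    mul_le_mul_of_nonneg_left hr (inv_nonneg.2 hpos.le)

section Deriv

variable {u g : ℝ → E} {s : Set ℝ}

theorem ae_differentiableAt_of_absolutelyContinuousOnInterval [FiniteDimensional ℝ E]
    (hu : ∀ x ∈ s, ∀ y ∈ s, AbsolutelyContinuousOnInterval u x y) :
    ∀ᵐ t, t ∈ s → DifferentiableAt ℝ u t := by
  refine ae_of_mem_of_ae_of_mem_inter_Ioo fun c d hc hd hcd ↦ ?_
  filter_upwards [(hu c hc d hd).boundedVariationOn.ae_differentiableAt_of_mem_uIcc] with t ht htcd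
  exact ht (uIcc_of_le hcd.le ▸ Ioo_subset_Icc_self htcd.2)

variable [OrdConnected s]

theorem ae_norm_deriv_le_of_norm_sub_le_integral (hg : LocallyIntegrableOn g s)
    (hu : ∀ x ∈ s, ∀ y ∈ s, x ≤ y → ‖u y - u x‖ ≤ ∫ t in x..y, ‖g t‖)
    (hdiff : ∀ᵐ t, t ∈ s → DifferentiableAt ℝ u t) : ∀ᵐ t, t ∈ s → ‖deriv u t‖ ≤ ‖g t‖ := by
  refine ae_of_mem_of_ae_of_mem_inter_Ioo fun c d hc hd _ ↦ ?_
  have hG := IsPrimitiveOn.intervalIntegral_of_locallyIntegrableOn hc hg.norm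
  filter_upwards [hdiff, hG.ae_hasDerivAt] with t hut hGt ⟨hts, htcd⟩
  refine norm_le_of_hasDerivWithinAt_Ioi_of_norm_sub_le (hut hts).hasDerivAt.hasDerivWithinAt
    (hGt hts).hasDerivWithinAt ?_
  filter_upwards [Ioo_mem_nhdsGT htcd.2] with r hr
  have hrs : r ∈ s := Set.Icc_subset s hts hd (Ioo_subset_Icc_self hr)
  rw [hG.sub_eq_integral t hts r hrs]
  exact hu t hts r hrs hr.1.le

theorem isPrimitiveOn_deriv_of_norm_sub_le_integral [FiniteDimensional ℝ E]
    (hg : LocallyIntegrableOn g s)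
    (hu : ∀ x ∈ s, ∀ y ∈ s, x ≤ y → ‖u y - u x‖ ≤ ∫ t in x..y, ‖g t‖) :
    IsPrimitiveOn u (deriv u) s ∧ ∀ᵐ t, t ∈ s → ‖deriv u t‖ ≤ ‖g t‖ := by
  have hac : ∀ x ∈ s, ∀ y ∈ s, AbsolutelyContinuousOnInterval u x y := fun x hx y hy ↦
    have hsub : uIcc x y ⊆ s := OrdConnected.uIcc_subset ‹_› hx hy
    absolutelyContinuousOnInterval_of_norm_sub_le_integral
      (intervalIntegrable_of_locallyIntegrableOn hg hx hy).norm
      fun r hr t ht ↦ hu r (hsub hr) t (hsub ht)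
  have hdiff := ae_differentiableAt_of_absolutelyContinuousOnInterval hac
  have hle := ae_norm_deriv_le_of_norm_sub_le_integral hg hu hdiff
  have hint : LocallyIntegrableOn (deriv u) s := by
    intro x hx
    obtain ⟨v, hv, hgv⟩ := hg x hx
    have hle_ae : ∀ᵐ t ∂volume.restrict s, ‖deriv u t‖ ≤ ‖g t‖ :=
      (ae_restrict_iff' (OrdConnected.measurableSet ‹_›)).2 hle
    exact ⟨v ∩ s, inter_mem hv self_mem_nhdsWithin, Integrable.mono
      (hgv.mono_set inter_subset_left) (aestronglyMeasurable_deriv u _)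
      (ae_restrict_of_ae_restrict_of_subset inter_subset_right hle_ae)⟩
  refine ⟨⟨hint, fun x hx y hy ↦ ?_⟩, hle⟩
  refine sub_eq_integral_of_absolutelyContinuousOnInterval (hac x hx y hy)
    (intervalIntegrable_of_locallyIntegrableOn hint hx hy) ?_
  filter_upwards [hdiff] with t ht hmem
  exact (ht (OrdConnected.uIcc_subset ‹_› hx hy hmem)).hasDerivAt

end Deriv

end Primitive

section InnerProduct

open scoped InnerProductSpace

variable {E : Type*} [NormedAddCommGroup E] [InnerProductSpace ℝ E]

theorem intervalIntegral_inner_const [CompleteSpace E] {f : ℝ → E} {x y : ℝ}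
    (hf : IntervalIntegrable f volume x y) (c : E) :
    ∫ t in x..y, ⟪f t, c⟫_ℝ = ⟪∫ t in x..y, f t, c⟫_ℝ := by
  simpa only [innerSL_apply_apply, real_inner_comm] using
    (innerSL ℝ c).intervalIntegral_comp_comm hf

theorem intervalIntegrable_inner_of_continuousOn {f G : ℝ → E} {x y : ℝ}
    (hf : IntervalIntegrable f volume x y) (hG : ContinuousOn G (uIcc x y)) :
    IntervalIntegrable (fun t ↦ ⟪f t, G t⟫_ℝ) volume x y := by
  obtain ⟨C, hC⟩ := isCompact_uIcc.exists_bound_of_continuousOn hG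
  rw [intervalIntegrable_iff] at hf ⊢
  refine (innerSL ℝ).integrable_of_bilin_of_bdd_right C hf
    ((hG.mono uIoc_subset_uIcc).aestronglyMeasurable measurableSet_uIoc) ?_
  exact ae_restrict_of_forall_mem measurableSet_uIoc fun t ht ↦ hC t (uIoc_subset_uIcc ht)

namespace IsPrimitiveOn

variable {F G f g : ℝ → E} {s : Set ℝ} [OrdConnected s] {x y : ℝ}

theorem absolutelyContinuousOnInterval_inner (hF : IsPrimitiveOn F f s)
    (hG : IsPrimitiveOn G g s) (hx : x ∈ s) (hy : y ∈ s) :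
    AbsolutelyContinuousOnInterval (fun t ↦ ⟪F t, G t⟫_ℝ) x y := by
  obtain ⟨C, hC⟩ := isCompact_uIcc.exists_bound_of_continuousOn (hF.continuousOn_uIcc hx hy)
  obtain ⟨D, hD⟩ := isCompact_uIcc.exists_bound_of_continuousOn (hG.continuousOn_uIcc hx hy)
  have hsub : uIcc x y ⊆ s := OrdConnected.uIcc_subset ‹_› hx hy
  have hf := (hF.intervalIntegrable hx hy).norm.mul_const D
  have hg := (hG.intervalIntegrable hx hy).norm.const_mul C
  refine absolutelyContinuousOnInterval_of_norm_sub_le_integral (hg.add hf)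
    fun r hr t ht hrt ↦ ?_
  calc ‖⟪F t, G t⟫_ℝ - ⟪F r, G r⟫_ℝ‖ = ‖⟪F t, G t - G r⟫_ℝ + ⟪F t - F r, G r⟫_ℝ‖ := by
        rw [inner_sub_left, inner_sub_right]; ring_nf
    _ ≤ ‖F t‖ * ‖G t - G r‖ + ‖F t - F r‖ * ‖G r‖ :=
        (norm_add_le _ _).trans (add_le_add (norm_inner_le_norm _ _) (norm_inner_le_norm _ _))
    _ ≤ C * (∫ w in r..t, ‖g w‖) + (∫ w in r..t, ‖f w‖) * D := by
        gcongr
        exacts [(norm_nonneg _).trans (hC t ht), hC t ht, hG.norm_sub_le (hsub hr) (hsub ht) hrt,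
          intervalIntegral.integral_nonneg hrt fun _ _ ↦ norm_nonneg _,
          hF.norm_sub_le (hsub hr) (hsub ht) hrt, hD r hr]
    _ = ∫ w in r..t, (C * ‖g w‖ + ‖f w‖ * D) := by
        rw [intervalIntegral.integral_add (hg.mono_set (uIcc_subset_uIcc hr ht))
          (hf.mono_set (uIcc_subset_uIcc hr ht)), intervalIntegral.integral_const_mul,
          intervalIntegral.integral_mul_const]

theorem inner_sub_inner_eq_integral [CompleteSpace E] (hF : IsPrimitiveOn F f s)
    (hG : IsPrimitiveOn G g s) (hx : x ∈ s) (hy : y ∈ s) :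
    ⟪F y, G y⟫_ℝ - ⟪F x, G x⟫_ℝ = ∫ t in x..y, (⟪F t, g t⟫_ℝ + ⟪f t, G t⟫_ℝ) := by
  refine sub_eq_integral_of_absolutelyContinuousOnInterval
    (hF.absolutelyContinuousOnInterval_inner hG hx hy) (.add ?_ ?_) ?_
  · simpa only [real_inner_comm] using intervalIntegrable_inner_of_continuousOn
      (hG.intervalIntegrable hx hy) (hF.continuousOn_uIcc hx hy)
  · exact intervalIntegrable_inner_of_continuousOn
      (hF.intervalIntegrable hx hy) (hG.continuousOn_uIcc hx hy)
  · filter_upwards [hF.ae_hasDerivAt, hG.ae_hasDerivAt] with t hFt hGt ht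
    have hts : t ∈ s := OrdConnected.uIcc_subset ‹_› hx hy ht
    exact (hFt hts).inner ℝ (hGt hts)

end IsPrimitiveOn

end InnerProduct

section Variation

variable {α E : Type*} [LinearOrder α] [NormedAddCommGroup E] {x y : α}

theorem eVariationOn_add_le (u v : α → E) (s : Set α) :
    eVariationOn (u + v) s ≤ eVariationOn u s + eVariationOn v s := by
  refine iSup_le fun ⟨n, p, hp, hps⟩ ↦ ?_
  refine (Finset.sum_le_sum fun i _ ↦ edist_add_add_le _ _ _ _).trans ?_
  rw [Finset.sum_add_distrib]
  exact add_le_add (eVariationOn.sum_le hp hps) (eVariationOn.sum_le hp hps)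

theorem eVariationOn_add_const (u : α → E) (c : E) (s : Set α) :
    eVariationOn (fun t ↦ u t + c) s = eVariationOn u s := by
  simp only [eVariationOn, edist_add_right]

theorem eVariationOn_const_smul_le [NormedSpace ℝ E] (c : ℝ) (u : α → E) (s : Set α) :
    eVariationOn (c • u) s ≤ ‖c‖ₑ * eVariationOn u s :=
  (lipschitzWith_smul c).lipschitzOnWith.comp_eVariationOn_le (mapsTo_univ u s)

theorem eVariationOn_indicator_Ioi_le (x : α) (e : E) (s : Set α) :
    eVariationOn ((Ioi x).indicator fun _ ↦ e) s ≤ ‖e‖ₑ := by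
  have hmono : Monotone fun t ↦ decide (x < t) := fun r t hrt ↦
    Bool.le_iff_imp.2 (by simpa using fun hr : x < r ↦ hr.trans_le hrt)
  have hcomp : (Ioi x).indicator (fun _ ↦ e) = (fun i : Bool ↦ if i then e else 0) ∘
      fun t ↦ decide (x < t) := by
    ext t; simp [indicator_apply]
  calc eVariationOn ((Ioi x).indicator fun _ ↦ e) s
      ≤ eVariationOn (fun i : Bool ↦ if i then e else 0) {true, false} := by
        rw [hcomp]
        exact eVariationOn.comp_le_of_monotoneOn _ _ (hmono.monotoneOn s)
          fun t _ ↦ by simp [lt_or_ge]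
    _ = ‖e‖ₑ := by simp [eVariationOn.pair]

theorem eVariationOn_eq_add_add (u : α → E) {s : Set α} (hx : x ∈ s) (hy : y ∈ s)
    (hxy : x ≤ y) :
    eVariationOn u s = eVariationOn u (s ∩ Iic x) + eVariationOn u (s ∩ Icc x y) +
      eVariationOn u (s ∩ Ici y) := by
  have hIic : eVariationOn u (s ∩ Iic y) =
      eVariationOn u (s ∩ Iic x) + eVariationOn u (s ∩ Icc x y) := by
    rw [← Iic_union_Icc_eq_Iic hxy, inter_union_distrib_left]
    exact eVariationOn.union u (x := x) ⟨⟨hx, le_rfl⟩, fun _ h ↦ h.2⟩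
      ⟨⟨hx, le_rfl, hxy⟩, fun _ h ↦ h.2.1⟩
  rw [← hIic, ← eVariationOn.union u (s := s ∩ Iic y) (t := s ∩ Ici y) (x := y)
    ⟨⟨hy, le_rfl⟩, fun _ h ↦ h.2⟩ ⟨⟨hy, le_rfl⟩, fun _ h ↦ h.2⟩, ← inter_union_distrib_left,
    Iic_union_Ici, inter_univ]

/-- The perturbation of `u` that makes it constant on `[x, y]` and translates it after `y`, so that
no new jump appears. -/
def collapseIcc (u : α → E) (hxy : x ≤ y) (t : α) : E := u x - u (projIcc x y hxy t)

theorem collapseIcc_of_le (u : α → E) (hxy : x ≤ y) {t : α} (ht : t ≤ x) :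
    collapseIcc u hxy t = 0 := by
  simp [collapseIcc, projIcc_of_le_left hxy ht]

theorem collapseIcc_of_mem (u : α → E) (hxy : x ≤ y) {t : α} (ht : t ∈ Icc x y) :
    collapseIcc u hxy t = u x - u t := by
  simp [collapseIcc, projIcc_of_mem hxy ht]

theorem collapseIcc_of_ge (u : α → E) (hxy : x ≤ y) {t : α} (ht : y ≤ t) :
    collapseIcc u hxy t = u x - u y := by
  simp [collapseIcc, projIcc_of_right_le hxy ht]

theorem norm_collapseIcc_le {u : α → E} (hxy : x ≤ y) (hu : BoundedVariationOn u (Icc x y))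
    (t : α) : ‖collapseIcc u hxy t‖ ≤ (eVariationOn u (Icc x y)).toReal := by
  rw [collapseIcc, ← dist_eq_norm]
  exact hu.dist_le (left_mem_Icc.2 hxy) (Subtype.coe_prop _)

theorem stronglyMeasurable_collapseIcc {u : ℝ → E} (hu : StronglyMeasurable u) {x y : ℝ}
    (hxy : x ≤ y) : StronglyMeasurable (collapseIcc u hxy) :=
  stronglyMeasurable_const.sub
    (hu.comp_measurable (continuous_subtype_val.comp continuous_projIcc).measurable)

theorem eVariationOn_add_collapseIcc (u : α → E) {s : Set α} (hx : x ∈ s) (hy : y ∈ s)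
    (hxy : x ≤ y) :
    eVariationOn (u + collapseIcc u hxy) s + eVariationOn u (s ∩ Icc x y) = eVariationOn u s := by
  have hIic : eVariationOn (u + collapseIcc u hxy) (s ∩ Iic x) = eVariationOn u (s ∩ Iic x) :=
    eVariationOn.congr fun t ht ↦ by simp [collapseIcc_of_le u hxy ht.2]
  have hIcc : eVariationOn (u + collapseIcc u hxy) (s ∩ Icc x y) = 0 :=
    eVariationOn.constant_on <| by
      rintro _ ⟨r, hr, rfl⟩ _ ⟨t, ht, rfl⟩
      simp [collapseIcc_of_mem u hxy hr.2, collapseIcc_of_mem u hxy ht.2]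
  have hIci : eVariationOn (u + collapseIcc u hxy) (s ∩ Ici y) = eVariationOn u (s ∩ Ici y) :=
    (eVariationOn.congr fun t ht ↦ by simp [collapseIcc_of_ge u hxy ht.2]).trans
      (eVariationOn_add_const u (u x - u y) _)
  rw [eVariationOn_eq_add_add u hx hy hxy, eVariationOn_eq_add_add _ hx hy hxy, hIic, hIcc, hIci,
    add_zero, add_right_comm]

end Variation

section Calibration

open Topology
open scoped InnerProductSpace

variable {E : Type*} [NormedAddCommGroup E] [InnerProductSpace ℝ E]

/-- `q` is a subgradient at `u` of the total variation over `s`. Only perturbations `v` are tested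
for which no term takes a junk value when `q` is integrable and `u` has bounded variation. -/
def IsTVSubgradientOn (q u : ℝ → E) (s : Set ℝ) : Prop :=
  ∀ v : ℝ → E, StronglyMeasurable v → (∃ C, ∀ t, ‖v t‖ ≤ C) → BoundedVariationOn (u + v) s →
    (eVariationOn u s).toReal + ∫ t in s, ⟪q t, v t⟫_ℝ ≤ (eVariationOn (u + v) s).toReal

/-- `z` calibrates `u` on `s`: it is a field in the unit ball with `z' = -q` which pairs with the
increments of `u` to its total variation. The right-hand side of `variation_le` is `∫ ⟪z, dDu⟫` over
`[x, y]`, integrated by parts so that no Stieltjes integral is needed. -/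
structure IsCalibration (q u z : ℝ → E) (s : Set ℝ) : Prop where
  isPrimitiveOn : IsPrimitiveOn z (-q) s
  norm_le_one : ∀ x ∈ s, ‖z x‖ ≤ 1
  boundedVariationOn : BoundedVariationOn u s
  locallyIntegrableOn_inner : LocallyIntegrableOn (fun t ↦ ⟪q t, u t⟫_ℝ) s
  variation_le : ∀ x ∈ s, ∀ y ∈ s, x ≤ y → (eVariationOn u (Icc x y)).toReal ≤
    (∫ t in x..y, ⟪q t, u t - u x⟫_ℝ) + ⟪z y, u y - u x⟫_ℝ

theorem isPrimitiveOn_integral_upper {q : ℝ → E} {a b : ℝ} (hq : IntegrableOn q (Ioo a b)) :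
    IsPrimitiveOn (fun x ↦ ∫ t in x..b, q t) (-q) (Ioo a b) where
  locallyIntegrableOn := hq.neg.locallyIntegrableOn
  sub_eq_integral x hx y hy := by
    have hint : ∀ r ∈ Ioo a b, IntervalIntegrable q volume r b := fun r hr ↦
      (intervalIntegrable_iff_integrableOn_Ioo_of_le hr.2.le).2
        (hq.mono_set (Ioo_subset_Ioo_left hr.1.le))
    simp only [Pi.neg_apply, intervalIntegral.integral_neg]
    rw [intervalIntegral.integral_symm b y, intervalIntegral.integral_symm b x, neg_sub_neg,
      intervalIntegral.integral_interval_sub_left (hint x hx).symm (hint y hy).symm,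
      intervalIntegral.integral_symm x y]

theorem setIntegral_inner_collapseIcc [CompleteSpace E] {q u : ℝ → E} {a b x y : ℝ}
    (hu : StronglyMeasurable u) (hBV : BoundedVariationOn u (Icc x y))
    (hq : IntegrableOn q (Ioo a b)) (hax : a ≤ x) (hxy : x ≤ y) (hyb : y ≤ b) :
    ∫ t in Ioo a b, ⟪q t, collapseIcc u hxy t⟫_ℝ =
      -((∫ t in x..y, ⟪q t, u t - u x⟫_ℝ) + ⟪∫ t in y..b, q t, u y - u x⟫_ℝ) := by
  set k : ℝ → ℝ := fun t ↦ ⟪q t, collapseIcc u hxy t⟫_ℝ with hk_def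
  have hk : IntervalIntegrable k volume a b :=
    (intervalIntegrable_iff_integrableOn_Ioo_of_le (hax.trans (hxy.trans hyb))).2 <|
      (innerSL ℝ).integrable_of_bilin_of_bdd_right _ hq
        (stronglyMeasurable_collapseIcc hu hxy).aestronglyMeasurable
        (.of_forall (norm_collapseIcc_le hxy hBV))
  have hk_sub : ∀ {c d}, a ≤ c → c ≤ d → d ≤ b → IntervalIntegrable k volume c d :=
    fun hac hcd hdb ↦ hk.mono_set <| by
      rw [uIcc_of_le hcd, uIcc_of_le (hac.trans (hcd.trans hdb))]
      exact Icc_subset_Icc hac hdb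
  have hq_yb : IntervalIntegrable q volume y b :=
    (intervalIntegrable_iff_integrableOn_Ioo_of_le hyb).2
      (hq.mono_set (Ioo_subset_Ioo_left (hax.trans hxy)))
  have hleft : ∫ t in a..x, k t = 0 := intervalIntegral.integral_zero_ae <| .of_forall fun t ht ↦ by
    rw [uIoc_of_le hax] at ht
    simp [hk_def, collapseIcc_of_le u hxy ht.2]
  have hmid : ∫ t in x..y, k t = -∫ t in x..y, ⟪q t, u t - u x⟫_ℝ := by
    rw [← intervalIntegral.integral_neg]
    refine intervalIntegral.integral_congr fun t ht ↦ ?_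
    rw [uIcc_of_le hxy] at ht
    simp only [hk_def, collapseIcc_of_mem u hxy ht, ← inner_neg_right, neg_sub]
  have hright : ∫ t in y..b, k t = -⟪∫ t in y..b, q t, u y - u x⟫_ℝ := by
    rw [← inner_neg_right, neg_sub, ← intervalIntegral_inner_const hq_yb]
    refine intervalIntegral.integral_congr fun t ht ↦ ?_
    rw [uIcc_of_le hyb] at ht
    simp only [hk_def, collapseIcc_of_ge u hxy ht.1]
  rw [← integral_Ioc_eq_integral_Ioo,
    ← intervalIntegral.integral_of_le (hax.trans (hxy.trans hyb)),
    ← intervalIntegral.integral_add_adjacent_intervals (hk_sub le_rfl hax (hxy.trans hyb))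
      (hk_sub hax (hxy.trans hyb) le_rfl),
    ← intervalIntegral.integral_add_adjacent_intervals (hk_sub hax hxy hyb)
      (hk_sub (hax.trans hxy) hyb le_rfl), hleft, hmid, hright]
  ring

namespace IsTVSubgradientOn

variable {q u : ℝ → E} {a b x y : ℝ}

theorem norm_integral_le_one [CompleteSpace E] (h : IsTVSubgradientOn q u (Ioo a b))
    (hBV : BoundedVariationOn u (Ioo a b)) (hq : IntegrableOn q (Ioo a b)) (hx : x ∈ Ioo a b) :
    ‖∫ t in x..b, q t‖ ≤ 1 := by
  set e := ∫ t in x..b, q t with he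
  have hle := (eVariationOn_add_le u _ _).trans
    (add_le_add_right (eVariationOn_indicator_Ioi_le x e (Ioo a b)) (eVariationOn u (Ioo a b)))
  have hsub := h ((Ioi x).indicator fun _ ↦ e)
    (stronglyMeasurable_const.indicator measurableSet_Ioi)
    ⟨‖e‖, fun t ↦ norm_indicator_le_norm_self _ t⟩
    (ne_top_of_le_ne_top (ENNReal.add_ne_top.2 ⟨hBV, enorm_ne_top⟩) hle)
  have hint : ∫ t in Ioo a b, ⟪q t, (Ioi x).indicator (fun _ ↦ e) t⟫_ℝ = ‖e‖ * ‖e‖ := by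
    have hinter : Ioo a b ∩ Ioi x = Ioo x b := by
      rw [Ioo_inter_Ioi, max_eq_right hx.1.le]
    have hind : (fun t ↦ ⟪q t, (Ioi x).indicator (fun _ ↦ e) t⟫_ℝ) =
        (Ioi x).indicator fun t ↦ ⟪e, q t⟫_ℝ := by
      ext t; by_cases ht : t ∈ Ioi x <;> simp [ht, real_inner_comm]
    rw [hind, setIntegral_indicator measurableSet_Ioi, hinter]
    rw [integral_inner (hq.mono_set (Ioo_subset_Ioo_left hx.1.le)), ← integral_Ioc_eq_integral_Ioo,
      ← intervalIntegral.integral_of_le hx.2.le, ← he, real_inner_self_eq_norm_mul_norm]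
  have hreal := ENNReal.toReal_mono (ENNReal.add_ne_top.2 ⟨hBV, enorm_ne_top⟩) hle
  rw [ENNReal.toReal_add hBV enorm_ne_top, toReal_enorm] at hreal
  rw [hint] at hsub
  nlinarith [norm_nonneg e]

theorem variation_Icc_le [CompleteSpace E] (h : IsTVSubgradientOn q u (Ioo a b))
    (hu : StronglyMeasurable u) (hBV : BoundedVariationOn u (Ioo a b))
    (hq : IntegrableOn q (Ioo a b)) (hx : x ∈ Ioo a b) (hy : y ∈ Ioo a b) (hxy : x ≤ y) :
    (eVariationOn u (Icc x y)).toReal ≤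
      (∫ t in x..y, ⟪q t, u t - u x⟫_ℝ) + ⟪∫ t in y..b, q t, u y - u x⟫_ℝ := by
  have hIcc : Icc x y ⊆ Ioo a b := ordConnected_Ioo.out hx hy
  have hBV_Icc : BoundedVariationOn u (Icc x y) := hBV.mono hIcc
  have hsplit := eVariationOn_add_collapseIcc u hx hy hxy
  rw [inter_eq_right.2 hIcc] at hsplit
  have hBV_add : BoundedVariationOn (u + collapseIcc u hxy) (Ioo a b) :=
    ne_top_of_le_ne_top hBV (hsplit ▸ le_self_add)
  have hsub := h (collapseIcc u hxy) (stronglyMeasurable_collapseIcc hu hxy)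
    ⟨_, norm_collapseIcc_le hxy hBV_Icc⟩ hBV_add
  rw [setIntegral_inner_collapseIcc hu hBV_Icc hq hx.1.le hxy hy.2.le, ← hsplit,
    ENNReal.toReal_add hBV_add hBV_Icc] at hsub
  linarith

theorem isCalibration [CompleteSpace E] (h : IsTVSubgradientOn q u (Ioo a b))
    (hu : StronglyMeasurable u) (hBV : BoundedVariationOn u (Ioo a b))
    (hq : IntegrableOn q (Ioo a b)) :
    IsCalibration q u (fun x ↦ ∫ t in x..b, q t) (Ioo a b) where
  isPrimitiveOn := isPrimitiveOn_integral_upper hq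
  norm_le_one _ hx := h.norm_integral_le_one hBV hq hx
  boundedVariationOn := hBV
  locallyIntegrableOn_inner x hx := by
    refine ⟨Ioo a b, self_mem_nhdsWithin, (innerSL ℝ).integrable_of_bilin_of_bdd_right
      (‖u x‖ + (eVariationOn u (Ioo a b)).toReal) hq hu.aestronglyMeasurable ?_⟩
    refine ae_restrict_of_forall_mem measurableSet_Ioo fun t ht ↦ ?_
    exact (norm_le_norm_add_norm_sub' _ _).trans
      (add_le_add_right (dist_eq_norm (u t) (u x) ▸ hBV.dist_le ht hx) _)
  variation_le _ hx _ hy hxy := h.variation_Icc_le hu hBV hq hx hy hxy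

end IsTVSubgradientOn

namespace IsCalibration

variable {q u z F g : ℝ → E} {s : Set ℝ} {x y : ℝ}

theorem mono {r : Set ℝ} (h : IsCalibration q u z s) (hrs : r ⊆ s) : IsCalibration q u z r where
  isPrimitiveOn := h.isPrimitiveOn.mono hrs
  norm_le_one x hx := h.norm_le_one x (hrs hx)
  boundedVariationOn := h.boundedVariationOn.mono hrs
  locallyIntegrableOn_inner := h.locallyIntegrableOn_inner.mono_set hrs
  variation_le x hx y hy := h.variation_le x (hrs hx) y (hrs hy)

variable [OrdConnected s]

theorem norm_sub_le_variation (h : IsCalibration q u z s) (hx : x ∈ s) (hy : y ∈ s) {r t : ℝ}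
    (hr : r ∈ Icc x y) (ht : t ∈ Icc x y) : ‖u t - u r‖ ≤ (eVariationOn u (Icc x y)).toReal := by
  rw [← dist_eq_norm]
  exact (h.boundedVariationOn.mono (OrdConnected.out ‹_› hx hy)).dist_le ht hr

theorem intervalIntegrable (h : IsCalibration q u z s) (hx : x ∈ s) (hy : y ∈ s) :
    IntervalIntegrable q volume x y := by
  simpa using (h.isPrimitiveOn.intervalIntegrable hx hy).neg

theorem variation_le_mul (h : IsCalibration q u z s) (hx : x ∈ s) (hy : y ∈ s) (hxy : x ≤ y) :
    (eVariationOn u (Icc x y)).toReal ≤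
      ((∫ t in x..y, ‖q t‖) + ‖z y‖) * (eVariationOn u (Icc x y)).toReal := by
  set V := (eVariationOn u (Icc x y)).toReal
  have hx' : x ∈ Icc x y := left_mem_Icc.2 hxy
  calc V ≤ (∫ t in x..y, ⟪q t, u t - u x⟫_ℝ) + ⟪z y, u y - u x⟫_ℝ := h.variation_le x hx y hy hxy
    _ ≤ (∫ t in x..y, ‖q t‖ * V) + ‖z y‖ * V := by
      refine add_le_add ((Real.le_norm_self _).trans ?_) ?_
      · refine intervalIntegral.norm_integral_le_of_norm_le hxy (.of_forall fun t ht ↦ ?_)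
          ((h.intervalIntegrable hx hy).norm.mul_const V)
        exact (norm_inner_le_norm (q t) (u t - u x)).trans (mul_le_mul_of_nonneg_left
          (h.norm_sub_le_variation hx hy hx' (Ioc_subset_Icc_self ht)) (norm_nonneg _))
      · exact (real_inner_le_norm (z y) (u y - u x)).trans (mul_le_mul_of_nonneg_left
          (h.norm_sub_le_variation hx hy hx' (right_mem_Icc.2 hxy)) (norm_nonneg _))
    _ = ((∫ t in x..y, ‖q t‖) + ‖z y‖) * V := by
      rw [intervalIntegral.integral_mul_const, add_mul]

theorem eq_of_integral_norm_add_norm_lt_one (h : IsCalibration q u z s) (hx : x ∈ s) (hy : y ∈ s)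
    (hxy : x ≤ y) (hlt : (∫ t in x..y, ‖q t‖) + ‖z y‖ < 1) : u x = u y := by
  have hV := h.variation_le_mul hx hy hxy
  have hnorm := h.norm_sub_le_variation hx hy (left_mem_Icc.2 hxy) (right_mem_Icc.2 hxy)
  have hzero : ‖u y - u x‖ ≤ 0 := by nlinarith [norm_nonneg (u y - u x)]
  exact (sub_eq_zero.1 (norm_le_zero_iff.1 hzero)).symm

theorem eq_of_norm_lt_one (h : IsCalibration q u z s) (hx : x ∈ s) (hy : y ∈ s) (hxy : x ≤ y)
    (hlt : ∀ t ∈ Icc x y, ‖z t‖ < 1) : u x = u y := by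
  have hsub : Icc x y ⊆ s := OrdConnected.out ‹_› hx hy
  have hq : IsPrimitiveOn (fun t ↦ ∫ r in x..t, ‖q r‖) (fun t ↦ ‖q t‖) s :=
    .intervalIntegral_of_locallyIntegrableOn hx
      (by simpa using h.isPrimitiveOn.locallyIntegrableOn.norm)
  have hz_cont : ContinuousOn z (Icc x y) := by
    simpa [hxy] using h.isPrimitiveOn.continuousOn_uIcc hx hy
  have hq_cont : ContinuousOn (fun t ↦ ∫ r in x..t, ‖q r‖) (Icc x y) := by
    simpa [hxy] using hq.continuousOn_uIcc hx hy
  refine isPreconnected_Icc.induction₂ (fun r t ↦ u r = u t) (fun r hr ↦ ?_)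
    (fun _ _ _ _ _ _ ↦ Eq.trans) (fun _ _ _ _ ↦ Eq.symm) (left_mem_Icc.2 hxy)
    (right_mem_Icc.2 hxy)
  have hright : Tendsto (fun t ↦ (∫ w in x..t, ‖q w‖) - (∫ w in x..r, ‖q w‖) + ‖z t‖)
      (𝓝[Icc x y] r) (𝓝 ((∫ w in x..r, ‖q w‖) - (∫ w in x..r, ‖q w‖) + ‖z r‖)) :=
    ((hq_cont r hr).tendsto.sub_const _).add (hz_cont r hr).norm
  have hleft : Tendsto (fun t ↦ (∫ w in x..r, ‖q w‖) - (∫ w in x..t, ‖q w‖) + ‖z r‖)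
      (𝓝[Icc x y] r) (𝓝 ((∫ w in x..r, ‖q w‖) - (∫ w in x..r, ‖q w‖) + ‖z r‖)) :=
    ((hq_cont r hr).tendsto.const_sub _).add_const _
  have hlim : (∫ w in x..r, ‖q w‖) - (∫ w in x..r, ‖q w‖) + ‖z r‖ < 1 := by simpa using hlt r hr
  filter_upwards [hright.eventually_lt_const hlim, hleft.eventually_lt_const hlim,
    self_mem_nhdsWithin] with t hrt htr ht
  rcases le_total r t with hle | hle
  · rw [hq.sub_eq_integral r (hsub hr) t (hsub ht)] at hrt
    exact h.eq_of_integral_norm_add_norm_lt_one (hsub hr) (hsub ht) hle hrt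
  · rw [hq.sub_eq_integral t (hsub ht) r (hsub hr)] at htr
    exact (h.eq_of_integral_norm_add_norm_lt_one (hsub ht) (hsub hr) hle htr).symm

theorem variation_le_integral_inner [CompleteSpace E] (h : IsCalibration q u z s) (hx : x ∈ s)
    (hy : y ∈ s) (hxy : x ≤ y) :
    (eVariationOn u (Icc x y)).toReal ≤
      (∫ t in x..y, ⟪q t, u t⟫_ℝ) + ⟪z y, u y⟫_ℝ - ⟪z x, u x⟫_ℝ := by
  have hq := h.intervalIntegrable hx hy
  have hz : ∫ t in x..y, q t = z x - z y := by
    rw [← neg_sub, h.isPrimitiveOn.sub_eq_integral x hx y hy]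
    simp
  have hvar := h.variation_le x hx y hy hxy
  simp_rw [inner_sub_right] at hvar
  rw [intervalIntegral.integral_sub
    (intervalIntegrable_of_locallyIntegrableOn h.locallyIntegrableOn_inner hx hy)
    (intervalIntegrable_inner_of_continuousOn hq continuousOn_const),
    intervalIntegral_inner_const hq, hz, inner_sub_left] at hvar
  linarith

theorem integral_inner_le_of_isPrimitiveOn [CompleteSpace E] (h : IsCalibration q u z s)
    (hF : IsPrimitiveOn F g s) (hx : x ∈ s) (hy : y ∈ s) (hxy : x ≤ y) :
    (∫ t in x..y, ⟪q t, F t⟫_ℝ) + ⟪z y, F y⟫_ℝ - ⟪z x, F x⟫_ℝ ≤ ∫ t in x..y, ‖g t‖ := by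
  have hqF : IntervalIntegrable (fun t ↦ ⟪q t, F t⟫_ℝ) volume x y :=
    intervalIntegrable_inner_of_continuousOn (h.intervalIntegrable hx hy)
      (hF.continuousOn_uIcc hx hy)
  have hgz : IntervalIntegrable (fun t ↦ ⟪g t, z t⟫_ℝ) volume x y :=
    intervalIntegrable_inner_of_continuousOn (hF.intervalIntegrable hx hy)
      (h.isPrimitiveOn.continuousOn_uIcc hx hy)
  have hgz_le : ∫ t in x..y, ⟪g t, z t⟫_ℝ ≤ ∫ t in x..y, ‖g t‖ := by
    refine intervalIntegral.integral_mono_on hxy hgz (hF.intervalIntegrable hx hy).norm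
      fun t ht ↦ (real_inner_le_norm _ _).trans ?_
    exact mul_le_of_le_one_right (norm_nonneg _)
      (h.norm_le_one t (OrdConnected.out ‹_› hx hy ht))
  have hparts := hF.inner_sub_inner_eq_integral h.isPrimitiveOn hx hy
  have hintegrand : ∀ t, ⟪F t, (-q) t⟫_ℝ + ⟪g t, z t⟫_ℝ = ⟪g t, z t⟫_ℝ - ⟪q t, F t⟫_ℝ := fun t ↦ by
    rw [Pi.neg_apply, inner_neg_right, real_inner_comm]; ring
  simp_rw [hintegrand] at hparts
  rw [intervalIntegral.integral_sub hgz hqF, real_inner_comm, real_inner_comm (z x)] at hparts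
  linarith

theorem variation_le_of_isPrimitiveOn [CompleteSpace E] {lam : ℝ} (h : IsCalibration q u z s)
    (hlam : 0 ≤ lam) (hF : IsPrimitiveOn (fun t ↦ u t + lam • q t) g s) (hx : x ∈ s) (hy : y ∈ s)
    (hxy : x ≤ y) :
    (eVariationOn u (Icc x y)).toReal ≤
      (∫ t in x..y, ‖g t‖) + lam * ⟪z x, q x⟫_ℝ - lam * ⟪z y, q y⟫_ℝ := by
  have hqu_le : ∫ t in x..y, ⟪q t, u t⟫_ℝ ≤ ∫ t in x..y, ⟪q t, u t + lam • q t⟫_ℝ := by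
    refine intervalIntegral.integral_mono hxy
      (intervalIntegrable_of_locallyIntegrableOn h.locallyIntegrableOn_inner hx hy)
      (intervalIntegrable_inner_of_continuousOn (h.intervalIntegrable hx hy)
        (hF.continuousOn_uIcc hx hy)) fun t ↦ ?_
    rw [inner_add_right, real_inner_smul_right]
    exact le_add_of_nonneg_right (mul_nonneg hlam real_inner_self_nonneg)
  have hvar := h.variation_le_integral_inner hx hy hxy
  have hF_le := h.integral_inner_le_of_isPrimitiveOn hF hx hy hxy
  rw [inner_add_right (z y), inner_add_right (z x), real_inner_smul_right,
    real_inner_smul_right] at hF_le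
  linarith

theorem norm_sq_sub_norm_sq [CompleteSpace E] (h : IsCalibration q u z s) (hx : x ∈ s)
    (hy : y ∈ s) : ‖z x‖ ^ 2 - ‖z y‖ ^ 2 = 2 * ∫ t in x..y, ⟪z t, q t⟫_ℝ := by
  have hparts := h.isPrimitiveOn.inner_sub_inner_eq_integral h.isPrimitiveOn hx hy
  have hintegrand : ∀ t, ⟪z t, (-q) t⟫_ℝ + ⟪(-q) t, z t⟫_ℝ = -2 * ⟪z t, q t⟫_ℝ := fun t ↦ by
    rw [real_inner_comm (z t), Pi.neg_apply, inner_neg_right]; ring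
  simp_rw [hintegrand, intervalIntegral.integral_const_mul, real_inner_self_eq_norm_sq] at hparts
  linarith

theorem intervalIntegrable_inner_field (h : IsCalibration q u z s) (hx : x ∈ s) (hy : y ∈ s) :
    IntervalIntegrable (fun t ↦ ⟪z t, q t⟫_ℝ) volume x y := by
  simpa only [real_inner_comm] using intervalIntegrable_inner_of_continuousOn
    (h.intervalIntegrable hx hy) (h.isPrimitiveOn.continuousOn_uIcc hx hy)

theorem exists_inner_nonpos_of_norm_eq_one [CompleteSpace E] (h : IsCalibration q u z s)
    (hx : x ∈ s) (hy : y ∈ s) (hxy : x < y) (hzy : ‖z y‖ = 1) :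
    ∃ t ∈ Ioo x y, ⟪z t, q t⟫_ℝ ≤ 0 := by
  by_contra! hpos
  have hint : 0 < ∫ t in x..y, ⟪z t, q t⟫_ℝ :=
    intervalIntegral.intervalIntegral_pos_of_pos_on (h.intervalIntegrable_inner_field hx hy)
      hpos hxy
  have hzx : ‖z x‖ ^ 2 ≤ 1 := pow_le_one₀ (norm_nonneg _) (h.norm_le_one x hx)
  have hsq := h.norm_sq_sub_norm_sq hx hy
  rw [hzy] at hsq
  linarith

theorem exists_inner_nonneg_of_norm_eq_one [CompleteSpace E] (h : IsCalibration q u z s)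
    (hx : x ∈ s) (hy : y ∈ s) (hxy : x < y) (hzx : ‖z x‖ = 1) :
    ∃ t ∈ Ioo x y, 0 ≤ ⟪z t, q t⟫_ℝ := by
  by_contra! hneg
  have hint : 0 < ∫ t in x..y, -⟪z t, q t⟫_ℝ :=
    intervalIntegral.intervalIntegral_pos_of_pos_on (h.intervalIntegrable_inner_field hx hy).neg
      (fun t ht ↦ neg_pos.2 (hneg t ht)) hxy
  have hzy : ‖z y‖ ^ 2 ≤ 1 := pow_le_one₀ (norm_nonneg _) (h.norm_le_one y hy)
  have hsq := h.norm_sq_sub_norm_sq hx hy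
  rw [hzx] at hsq
  rw [intervalIntegral.integral_neg] at hint
  linarith

theorem exists_inner_nonpos_and_eq [CompleteSpace E] (h : IsCalibration q u z s) {x' p : ℝ}
    (hx' : x' ∈ s) (hp : p ∈ s) (hx'x : x' < x) (hxp : x ≤ p) (hzp : ‖z p‖ = 1)
    (hlt : ∀ t ∈ Ico x p, ‖z t‖ < 1) :
    ∃ t ∈ Ioo x' p, ⟪z t, q t⟫_ℝ ≤ 0 ∧ ∃ r ∈ Icc t p, u r = u x := by
  have hx : x ∈ s := OrdConnected.out ‹_› hx' hp ⟨hx'x.le, hxp⟩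
  rcases hxp.eq_or_lt with rfl | hxp
  · obtain ⟨t, ht, hzt⟩ := h.exists_inner_nonpos_of_norm_eq_one hx' hp hx'x hzp
    exact ⟨t, ht, hzt, x, right_mem_Icc.2 ht.2.le, rfl⟩
  · obtain ⟨t, ht, hzt⟩ := h.exists_inner_nonpos_of_norm_eq_one hx hp hxp hzp
    refine ⟨t, ⟨hx'x.trans ht.1, ht.2⟩, hzt, t, left_mem_Icc.2 ht.2.le, ?_⟩
    exact (h.eq_of_norm_lt_one hx (OrdConnected.out ‹_› hx hp (Ioo_subset_Icc_self ht)) ht.1.le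
      fun r hr ↦ hlt r ⟨hr.1, hr.2.trans_lt ht.2⟩).symm

theorem exists_inner_nonneg_and_eq [CompleteSpace E] (h : IsCalibration q u z s) {p y' : ℝ}
    (hp : p ∈ s) (hy' : y' ∈ s) (hpy : p ≤ y) (hyy' : y < y') (hzp : ‖z p‖ = 1)
    (hlt : ∀ t ∈ Ioc p y, ‖z t‖ < 1) :
    ∃ t ∈ Ioo p y', 0 ≤ ⟪z t, q t⟫_ℝ ∧ ∃ r ∈ Icc p t, u r = u y := by
  have hy : y ∈ s := OrdConnected.out ‹_› hp hy' ⟨hpy, hyy'.le⟩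
  rcases hpy.eq_or_lt with rfl | hpy
  · obtain ⟨t, ht, hzt⟩ := h.exists_inner_nonneg_of_norm_eq_one hp hy' hyy' hzp
    exact ⟨t, ht, hzt, p, left_mem_Icc.2 ht.1.le, rfl⟩
  · obtain ⟨t, ht, hzt⟩ := h.exists_inner_nonneg_of_norm_eq_one hp hy hpy hzp
    refine ⟨t, ⟨ht.1, ht.2.trans hyy'⟩, hzt, t, right_mem_Icc.2 ht.1.le, ?_⟩
    exact h.eq_of_norm_lt_one (OrdConnected.out ‹_› hp hy (Ioo_subset_Icc_self ht)) hy ht.2.le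
      fun r hr ↦ hlt r ⟨ht.1.trans_le hr.1, hr.2⟩

theorem eq_or_exists_contact (h : IsCalibration q u z s) (hx : x ∈ s) (hy : y ∈ s) (hxy : x ≤ y) :
    u x = u y ∨ ∃ p ∈ Icc x y, ∃ p' ∈ Icc p y, ‖z p‖ = 1 ∧ ‖z p'‖ = 1 ∧
      (∀ t ∈ Ico x p, ‖z t‖ < 1) ∧ ∀ t ∈ Ioc p' y, ‖z t‖ < 1 := by
  have hsub : Icc x y ⊆ s := OrdConnected.out ‹_› hx hy
  have hlt : ∀ t ∈ Icc x y, ‖z t‖ ≠ 1 → ‖z t‖ < 1 := fun t ht ↦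
    (h.norm_le_one t (hsub ht)).lt_of_ne
  have hcont : ContinuousOn z (Icc x y) := by
    simpa [hxy] using h.isPrimitiveOn.continuousOn_uIcc hx hy
  have hcompact : IsCompact (Icc x y ∩ (fun t ↦ ‖z t‖) ⁻¹' {1}) :=
    isCompact_Icc.of_isClosed_subset
      (hcont.norm.preimage_isClosed_of_isClosed isClosed_Icc isClosed_singleton) inter_subset_left
  rcases (Icc x y ∩ (fun t ↦ ‖z t‖) ⁻¹' {1}).eq_empty_or_nonempty with hempty | hne
  · exact .inl <| h.eq_of_norm_lt_one hx hy hxy fun t ht ↦ hlt t ht fun hzt ↦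
      (hempty.subset ⟨ht, hzt⟩ : t ∈ (∅ : Set ℝ))
  obtain ⟨p, ⟨hp, hzp⟩, hp_least⟩ := hcompact.exists_isLeast hne
  obtain ⟨p', ⟨hp', hzp'⟩, hp'_greatest⟩ := hcompact.exists_isGreatest hne
  refine .inr ⟨p, hp, p', ⟨hp_least ⟨hp', hzp'⟩, hp'.2⟩, hzp, hzp', fun t ht ↦ ?_, fun t ht ↦ ?_⟩
  · have htI : t ∈ Icc x y := ⟨ht.1, ht.2.le.trans hp.2⟩
    exact hlt t htI fun hzt ↦ ht.2.not_ge (hp_least ⟨htI, hzt⟩)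
  · have htI : t ∈ Icc x y := ⟨hp'.1.trans ht.1.le, ht.2⟩
    exact hlt t htI fun hzt ↦ ht.1.not_ge (hp'_greatest ⟨htI, hzt⟩)

theorem norm_sub_le_integral [CompleteSpace E] {lam : ℝ} (h : IsCalibration q u z s)
    (hs : IsOpen s) (hlam : 0 ≤ lam) (hF : IsPrimitiveOn (fun t ↦ u t + lam • q t) g s)
    (hx : x ∈ s) (hy : y ∈ s) (hxy : x ≤ y) : ‖u y - u x‖ ≤ ∫ t in x..y, ‖g t‖ := by
  rcases h.eq_or_exists_contact hx hy hxy with huxy | ⟨p, hp, p', hp', hzp, hzp', hlt, hlt'⟩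
  · rw [huxy, sub_self, norm_zero]
    exact intervalIntegral.integral_nonneg hxy fun _ _ ↦ norm_nonneg _
  have hps : p ∈ s := OrdConnected.out ‹_› hx hy hp
  have hp's : p' ∈ s := OrdConnected.out ‹_› hps hy hp'
  refine le_integral_of_forall_lt_of_forall_gt hs hF.locallyIntegrableOn.norm hx hy
    fun x' hx' hx'x y' hy' hyy' ↦ ?_
  obtain ⟨t, ht, htq, r, hr, hur⟩ := h.exists_inner_nonpos_and_eq hx' hps hx'x hp.1 hzp hlt
  obtain ⟨t', ht', htq', r', hr', hur'⟩ :=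
    h.exists_inner_nonneg_and_eq hp's hy' hp'.2 hyy' hzp' hlt'
  have hts : t ∈ s := OrdConnected.out ‹_› hx' hps (Ioo_subset_Icc_self ht)
  have hts' : t' ∈ s := OrdConnected.out ‹_› hp's hy' (Ioo_subset_Icc_self ht')
  have htt' : t ≤ t' := ht.2.le.trans (hp'.1.trans ht'.1.le)
  calc ‖u y - u x‖ = ‖u r' - u r‖ := by rw [hur, hur']
    _ ≤ (eVariationOn u (Icc t t')).toReal := h.norm_sub_le_variation hts hts'
        ⟨hr.1, hr.2.trans (hp'.1.trans ht'.1.le)⟩ ⟨ht.2.le.trans (hp'.1.trans hr'.1), hr'.2⟩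
    _ ≤ (∫ w in t..t', ‖g w‖) + lam * ⟪z t, q t⟫_ℝ - lam * ⟪z t', q t'⟫_ℝ :=
        h.variation_le_of_isPrimitiveOn hlam hF hts hts' htt'
    _ ≤ ∫ w in t..t', ‖g w‖ := by
        linarith [mul_nonpos_of_nonneg_of_nonpos hlam htq, mul_nonneg hlam htq']
    _ ≤ ∫ w in x'..y', ‖g w‖ :=
        intervalIntegral.integral_mono_interval ht.1.le htt' ht'.2.le
          (.of_forall fun _ ↦ norm_nonneg _) (hF.intervalIntegrable hx' hy').norm

end IsCalibration

end Calibration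

section FirstVariation

open Topology
open scoped InnerProductSpace

theorem le_of_forall_le_add_mul {c d C : ℝ} (h : ∀ t ∈ Ioo (0 : ℝ) 1, c ≤ d + t * C) : c ≤ d := by
  have hlim : Tendsto (fun t : ℝ ↦ d + t * C) (𝓝[>] 0) (𝓝 (d + 0 * C)) :=
    (Continuous.tendsto (by fun_prop) 0).mono_left nhdsWithin_le_nhds
  rw [zero_mul, add_zero] at hlim
  exact ge_of_tendsto hlim (by filter_upwards [Ioo_mem_nhdsGT one_pos] using h)

theorem integral_norm_add_smul_sq {α E : Type*} [MeasurableSpace α] {μ : Measure α}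
    [NormedAddCommGroup E] [InnerProductSpace ℝ E] {g v : α → E} (hg : MemLp g 2 μ)
    (hv : MemLp v 2 μ) (t : ℝ) :
    ∫ x, ‖g x + t • v x‖ ^ 2 ∂μ =
      (∫ x, ‖g x‖ ^ 2 ∂μ) + 2 * t * (∫ x, ⟪g x, v x⟫_ℝ ∂μ) + t ^ 2 * ∫ x, ‖v x‖ ^ 2 ∂μ := by
  have hg_sq := (memLp_two_iff_integrable_sq_norm hg.1).1 hg
  have hv_sq := (memLp_two_iff_integrable_sq_norm hv.1).1 hv
  have hgv : Integrable (fun x ↦ ⟪g x, v x⟫_ℝ) μ :=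
    memLp_one_iff_integrable.1 ((innerSL ℝ).memLp_of_bilin 1 hg hv)
  have hexpand : ∀ x, ‖g x + t • v x‖ ^ 2 =
      ‖g x‖ ^ 2 + 2 * t * ⟪g x, v x⟫_ℝ + t ^ 2 * ‖v x‖ ^ 2 := fun x ↦ by
    rw [norm_add_sq_real, real_inner_smul_right, norm_smul, mul_pow, Real.norm_eq_abs, sq_abs]
    ring
  simp_rw [hexpand]
  rw [integral_add (by exact hg_sq.add (hgv.const_mul _)) (hv_sq.const_mul _),
    integral_add hg_sq (hgv.const_mul _), integral_const_mul, integral_const_mul]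

theorem eVariationOn_add_smul_le {α E : Type*} [LinearOrder α] [NormedAddCommGroup E]
    [NormedSpace ℝ E] (u v : α → E) (s : Set α) (t : ℝ) :
    eVariationOn (u + t • v) s ≤ ‖1 - t‖ₑ * eVariationOn u s + ‖t‖ₑ * eVariationOn (u + v) s := by
  have hcomb : u + t • v = (1 - t) • u + t • (u + v) := by module
  rw [hcomb]
  exact (eVariationOn_add_le _ _ s).trans
    (add_le_add (eVariationOn_const_smul_le _ _ s) (eVariationOn_const_smul_le _ _ s))

theorem toReal_eVariationOn_add_smul_le {α E : Type*} [LinearOrder α] [NormedAddCommGroup E]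
    [NormedSpace ℝ E] {u v : α → E} {s : Set α} (hu : BoundedVariationOn u s)
    (huv : BoundedVariationOn (u + v) s) {t : ℝ} (ht : t ∈ Icc (0 : ℝ) 1) :
    BoundedVariationOn (u + t • v) s ∧ (eVariationOn (u + t • v) s).toReal ≤
      (1 - t) * (eVariationOn u s).toReal + t * (eVariationOn (u + v) s).toReal := by
  have hu_ne_top := ENNReal.mul_ne_top (enorm_ne_top (x := 1 - t)) hu
  have huv_ne_top := ENNReal.mul_ne_top (enorm_ne_top (x := t)) huv
  have hne_top := ENNReal.add_ne_top.2 ⟨hu_ne_top, huv_ne_top⟩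
  have hle := eVariationOn_add_smul_le u v s t
  have hreal := ENNReal.toReal_mono hne_top hle
  rw [ENNReal.toReal_add hu_ne_top huv_ne_top, ENNReal.toReal_mul, ENNReal.toReal_mul,
    toReal_enorm, toReal_enorm, Real.norm_of_nonneg (sub_nonneg.2 ht.2),
    Real.norm_of_nonneg ht.1] at hreal
  exact ⟨ne_top_of_le_ne_top hne_top hle, hreal⟩

namespace IsMinimizer

variable {n : ℕ} {lam a b : ℝ} {f u w : ℝ → EuclideanSpace ℝ (Fin n)}

theorem boundedVariationOn (hu : IsMinimizer lam a b f u) : BoundedVariationOn u (Ioo a b) := by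
  have hzero : eVariationOn (fun _ : ℝ ↦ (0 : EuclideanSpace ℝ (Fin n))) (Ioo a b) = 0 :=
    eVariationOn.constant_on (subsingleton_singleton.anti (image_subset_iff.2 fun _ _ ↦ rfl))
  have hle := hu.2.2 (fun _ ↦ 0) measurable_const (by simp [SqIntOn])
  rw [rofEnergy, rofEnergy, hzero, zero_add] at hle
  exact ne_top_of_le_ne_top ENNReal.ofReal_ne_top (le_self_add.trans hle)

theorem memLp_sub (hu : IsMinimizer lam a b f u) (hf : MemLp f 2 (volume.restrict (Ioo a b))) :
    MemLp (fun t ↦ u t - f t) 2 (volume.restrict (Ioo a b)) :=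
  ((memLp_two_iff_integrable_sq_norm hu.1.aestronglyMeasurable).2 hu.2.1).sub hf

theorem variation_add_le (hu : IsMinimizer lam a b f u) (hlam : 0 < lam) (hw : Measurable w)
    (hw_sq : SqIntOn w (Ioo a b)) (hw_BV : BoundedVariationOn w (Ioo a b)) :
    (eVariationOn u (Ioo a b)).toReal + 1 / (2 * lam) * ∫ t in Ioo a b, ‖u t - f t‖ ^ 2 ≤
      (eVariationOn w (Ioo a b)).toReal + 1 / (2 * lam) * ∫ t in Ioo a b, ‖w t - f t‖ ^ 2 := by
  have hfidelity : ∀ w' : ℝ → EuclideanSpace ℝ (Fin n),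
      0 ≤ 1 / (2 * lam) * ∫ t in Ioo a b, ‖w' t - f t‖ ^ 2 := fun w' ↦
    mul_nonneg (by positivity) (integral_nonneg fun _ ↦ by positivity)
  have hle := ENNReal.toReal_mono (ENNReal.add_ne_top.2 ⟨hw_BV, ENNReal.ofReal_ne_top⟩)
    (hu.2.2 w hw hw_sq)
  rwa [rofEnergy, ENNReal.toReal_add hu.boundedVariationOn ENNReal.ofReal_ne_top,
    ENNReal.toReal_add hw_BV ENNReal.ofReal_ne_top, ENNReal.toReal_ofReal (hfidelity u),
    ENNReal.toReal_ofReal (hfidelity w)] at hle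

theorem variation_le_add_integral_inner_add_mul (hu : IsMinimizer lam a b f u) (hlam : 0 < lam)
    (hf : MemLp f 2 (volume.restrict (Ioo a b))) {v : ℝ → EuclideanSpace ℝ (Fin n)}
    (hv : Measurable v) (hv_sq : MemLp v 2 (volume.restrict (Ioo a b)))
    (huv : BoundedVariationOn (u + v) (Ioo a b)) {t : ℝ} (ht : t ∈ Ioo (0 : ℝ) 1) :
    (eVariationOn u (Ioo a b)).toReal ≤ (eVariationOn (u + v) (Ioo a b)).toReal +
      lam⁻¹ * (∫ r in Ioo a b, ⟪u r - f r, v r⟫_ℝ) +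
      t * (1 / (2 * lam) * ∫ r in Ioo a b, ‖v r‖ ^ 2) := by
  obtain ⟨hBV, hconvex⟩ :=
    toReal_eVariationOn_add_smul_le hu.boundedVariationOn huv (Ioo_subset_Icc_self ht)
  have hw : Measurable (u + t • v) := hu.1.add (hv.const_smul t)
  have hw_sq : SqIntOn (u + t • v) (Ioo a b) :=
    (memLp_two_iff_integrable_sq_norm hw.aestronglyMeasurable).1 <|
      ((memLp_two_iff_integrable_sq_norm hu.1.aestronglyMeasurable).2 hu.2.1).add
        (hv_sq.const_smul t)
  have hmin := hu.variation_add_le hlam hw hw_sq hBV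
  have hexpand := integral_norm_add_smul_sq (hu.memLp_sub hf) hv_sq t
  simp_rw [sub_add_eq_add_sub] at hexpand
  simp only [Pi.add_apply, Pi.smul_apply] at hmin
  rw [hexpand] at hmin
  refine le_of_mul_le_mul_left ?_ ht.1
  linear_combination hmin + hconvex

theorem isTVSubgradientOn (hu : IsMinimizer lam a b f u) (hlam : 0 < lam)
    (hf : MemLp f 2 (volume.restrict (Ioo a b))) :
    IsTVSubgradientOn (fun t ↦ lam⁻¹ • (f t - u t)) u (Ioo a b) := by
  rintro v hv ⟨C, hC⟩ huv
  have hv_sq : MemLp v 2 (volume.restrict (Ioo a b)) :=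
    .of_bound hv.aestronglyMeasurable C (.of_forall hC)
  have hle := le_of_forall_le_add_mul fun t ht ↦
    hu.variation_le_add_integral_inner_add_mul hlam hf hv.measurable hv_sq huv ht
  have hinner : ∀ t, ⟪lam⁻¹ • (f t - u t), v t⟫_ℝ = -(lam⁻¹ * ⟪u t - f t, v t⟫_ℝ) := fun t ↦ by
    rw [real_inner_smul_left, ← neg_sub, inner_neg_left, mul_neg]
  simp_rw [hinner]
  rw [integral_neg, integral_const_mul]
  linarith

theorem isCalibration (hu : IsMinimizer lam a b f u) (hlam : 0 < lam)
    (hf : MemLp f 2 (volume.restrict (Ioo a b))) :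
    IsCalibration (fun t ↦ lam⁻¹ • (f t - u t)) u
      (fun x ↦ ∫ t in x..b, lam⁻¹ • (f t - u t)) (Ioo a b) := by
  refine (hu.isTVSubgradientOn hlam hf).isCalibration hu.1.stronglyMeasurable
    hu.boundedVariationOn ?_
  have hint := ((hu.memLp_sub hf).neg.integrable one_le_two).smul lam⁻¹
  exact hint.congr (.of_forall fun t ↦ by simp)

theorem norm_sub_le_integral (hu : IsMinimizer lam a b f u) (hlam : 0 < lam)
    (hf : MemLp f 2 (volume.restrict (Ioo a b))) {g : ℝ → EuclideanSpace ℝ (Fin n)} {s : Set ℝ}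
    [OrdConnected s] (hs : IsOpen s) (hsub : s ⊆ Ioo a b) (hfg : IsPrimitiveOn f g s) {x y : ℝ}
    (hx : x ∈ s) (hy : y ∈ s) (hxy : x ≤ y) : ‖u y - u x‖ ≤ ∫ t in x..y, ‖g t‖ := by
  refine ((hu.isCalibration hlam hf).mono hsub).norm_sub_le_integral hs hlam.le ?_ hx hy hxy
  simpa only [smul_inv_smul₀ hlam.ne', add_sub_cancel] using hfg

end IsMinimizer

end FirstVariation

theorem minimizer_absolutely_continuous_of_datum_absolutely_continuous_general
    {n : ℕ} {a b lam : ℝ} (hlam : 0 < lam) {f u g : ℝ → EuclideanSpace ℝ (Fin n)}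
    (hf : MemLp f 2 (volume.restrict (Ioo a b))) (hu : IsMinimizer lam a b f u)
    {s : Set ℝ} [OrdConnected s] (hs : IsOpen s) (hsub : s ⊆ Ioo a b)
    (hfg : IsPrimitiveOn f g s) :
    ∃ h : ℝ → EuclideanSpace ℝ (Fin n), IsPrimitiveOn u h s ∧
      (∀ᵐ x ∂volume.restrict s, ‖h x‖ ≤ ‖g x‖) ∧
      ∀ p : ℝ, 0 ≤ p → IntegrableOn (fun x ↦ ‖g x‖ ^ p) s →
        ∫ x in s, ‖h x‖ ^ p ≤ ∫ x in s, ‖g x‖ ^ p := by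
  obtain ⟨hprim, hle⟩ := isPrimitiveOn_deriv_of_norm_sub_le_integral hfg.locallyIntegrableOn
    fun x hx y hy ↦ hu.norm_sub_le_integral hlam hf hs hsub hfg hx hy
  have hle_ae := (ae_restrict_iff' hs.measurableSet).2 hle
  refine ⟨deriv u, hprim, hle_ae, fun p hp hgp ↦ ?_⟩
  refine integral_mono_of_nonneg (.of_forall fun _ ↦ by positivity) hgp ?_
  filter_upwards [hle_ae] with x hx using Real.rpow_le_rpow (norm_nonneg _) hx hp

/-- if the datum `f` is absolutely continuous on an open subinterval
`U = Ioo c d` with density `g` satisfying `∫_U ‖g‖^p < ∞`, then the ROF minimizer has a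
representative which is absolutely continuous on `U` with density `h` satisfying
`‖h‖ ≤ ‖g‖` a.e. on `U`; in particular `∫_U ‖h‖^p ≤ ∫_U ‖g‖^p`. -/
theorem minimizer_absolutely_continuous_of_datum_absolutely_continuous
    {n : ℕ} (hn : 1 ≤ n) (a b : ℝ) (hab : a < b) (lam : ℝ) (hlam : 0 < lam)
    (f : ℝ → EuclideanSpace ℝ (Fin n)) (hf_meas : Measurable f)
    (hf_sq : SqIntOn f (Set.Ioo a b))
    (u : ℝ → EuclideanSpace ℝ (Fin n)) (hu : IsMinimizer lam a b f u)
    (c d : ℝ) (hU : Set.Ioo c d ⊆ Set.Ioo a b)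
    (p : ℝ) (hp : 1 ≤ p)
    (g : ℝ → EuclideanSpace ℝ (Fin n))
    (hg_loc : MeasureTheory.LocallyIntegrableOn g (Set.Ioo c d))
    (hfg : ∀ x ∈ Set.Ioo c d, ∀ y ∈ Set.Ioo c d, f y - f x = ∫ t in x..y, g t)
    (hgp : MeasureTheory.IntegrableOn (fun x => ‖g x‖ ^ p) (Set.Ioo c d)) :
    ∃ ubar h : ℝ → EuclideanSpace ℝ (Fin n),
      (∀ᵐ x ∂(MeasureTheory.volume.restrict (Set.Ioo a b)), ubar x = u x) ∧
      MeasureTheory.LocallyIntegrableOn h (Set.Ioo c d) ∧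
      (∀ x ∈ Set.Ioo c d, ∀ y ∈ Set.Ioo c d, ubar y - ubar x = ∫ t in x..y, h t) ∧
      (∀ᵐ x ∂(MeasureTheory.volume.restrict (Set.Ioo c d)), ‖h x‖ ≤ ‖g x‖) ∧
      (∫ x in Set.Ioo c d, ‖h x‖ ^ p) ≤ ∫ x in Set.Ioo c d, ‖g x‖ ^ p := by
  obtain ⟨h, hprim, hle, hp_le⟩ :=
    minimizer_absolutely_continuous_of_datum_absolutely_continuous_general hlam
      ((memLp_two_iff_integrable_sq_norm hf_meas.aestronglyMeasurable).2 hf_sq) hu isOpen_Ioo hU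
      ⟨hg_loc, hfg⟩
  exact ⟨u, h, .of_forall fun _ ↦ rfl, hprim.locallyIntegrableOn, hprim.sub_eq_integral, hle,
    hp_le p (zero_le_one.trans hp) hgp⟩
end
end

section
/- For every ε > 0 the regularized energy E_ε admits a minimizer over H¹(I,ℝⁿ), and it is unique up to equality almost everywhere on I: if u₁ and u₂ both minimize E_ε over H¹(I,ℝⁿ), then u₁ = u₂ on [a,b]. -/
open MeasureTheory Set Filter
open scoped ENNReal

noncomputable section

/-- `w` belongs to `H¹(I, ℝⁿ)` with (weak) derivative `w'`: it is continuous on `[a,b]`,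
`w'` is square-integrable on `I = Ioo a b`, and the fundamental theorem of calculus holds. -/
def InH1 {n : ℕ} (a b : ℝ) (w w' : ℝ → EuclideanSpace ℝ (Fin n)) : Prop :=
  ContinuousOn w (Set.Icc a b) ∧
  MeasureTheory.IntegrableOn (fun x => ‖w' x‖ ^ 2) (Set.Ioo a b) ∧
  ∀ x ∈ Set.Icc a b, ∀ y ∈ Set.Icc a b, w y - w x = ∫ t in x..y, w' t

/-- The regularized energy `E_ε` evaluated at `w ∈ H¹` with derivative `w'`. -/
def regEnergy {n : ℕ} (lam ε a b : ℝ) (f w w' : ℝ → EuclideanSpace ℝ (Fin n)) : ℝ :=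
  ∫ x in Set.Ioo a b, ((1 / (2 * lam)) * ‖w x - f x‖ ^ 2
    + Real.sqrt (‖w' x‖ ^ 2 + ε ^ 2) + (ε ^ 2 / 2) * ‖w' x‖ ^ 2)

/-- `u` (with derivative `u'`) minimizes `E_ε` over `H¹(I, ℝⁿ)`. -/
def IsMinimizerEps {n : ℕ} (lam ε a b : ℝ) (f u u' : ℝ → EuclideanSpace ℝ (Fin n)) : Prop :=
  InH1 a b u u' ∧ ∀ v v' : ℝ → EuclideanSpace ℝ (Fin n), InH1 a b v v' →
    regEnergy lam ε a b f u u' ≤ regEnergy lam ε a b f v v'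

/-! A pair `(u, u')` belongs to `H¹(a, b)` iff `u` minus the primitive of `u'` is constant, so `H¹` is
the preimage of a complete subspace of `L²` under a bounded operator, hence a closed subspace of
`L² × L²`. On `L² × L²` the energy is continuous and strongly convex: the two squared norms give the
modulus, one in each factor, and the remaining term is convex. Strong convexity makes minimizing
sequences Cauchy, which gives existence and uniqueness. -/

section StrongConvexity

variable {V W : Type*} [NormedAddCommGroup V] [NormedAddCommGroup W] [NormedSpace ℝ W]

lemma mul_norm_sub_sq_le_of_strongConvexOn [NormedSpace ℝ V] {s : Set V} {m c : ℝ} {F : V → ℝ}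
    (hF : StrongConvexOn s m F) (hc : ∀ z ∈ s, c ≤ F z) {x y : V} (hx : x ∈ s) (hy : y ∈ s) :
    m / 8 * ‖x - y‖ ^ 2 ≤ (F x + F y) / 2 - c := by
  have hhalf : (0 : ℝ) ≤ 1 / 2 := by norm_num
  have hmid := hF.2 hx hy hhalf hhalf (add_halves 1)
  have hlow := hc _ (hF.1 hx hy hhalf hhalf (add_halves 1))
  simp only [smul_eq_mul] at hmid
  linarith

lemma cauchySeq_of_strongConvexOn [NormedSpace ℝ V] {s : Set V} {m c : ℝ} {F : V → ℝ}
    (hF : StrongConvexOn s m F) (hm : 0 < m) (hc : ∀ z ∈ s, c ≤ F z) {u : ℕ → V}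
    (hu : ∀ k, u k ∈ s) (hFu : Tendsto (fun k => F (u k)) atTop (nhds c)) : CauchySeq u := by
  rw [Metric.cauchySeq_iff']
  intro e he
  have hlt : c < c + m / 8 * e ^ 2 := by
    have : 0 < m / 8 * e ^ 2 := by positivity
    linarith
  obtain ⟨N, hN⟩ := eventually_atTop.1 (hFu.eventually (gt_mem_nhds hlt))
  refine ⟨N, fun k hk => ?_⟩
  have hclose : m / 8 * ‖u k - u N‖ ^ 2 < m / 8 * e ^ 2 := by
    linarith [mul_norm_sub_sq_le_of_strongConvexOn hF hc (hu k) (hu N), hN k hk, hN N le_rfl]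
  rw [dist_eq_norm]
  exact lt_of_pow_lt_pow_left₀ 2 he.le (lt_of_mul_lt_mul_left hclose (by positivity))

theorem existsUnique_isMinOn_of_strongConvexOn [NormedSpace ℝ V] {s : Set V} {m : ℝ} {F : V → ℝ}
    (hs : IsComplete s) (hne : s.Nonempty) (hF : StrongConvexOn s m F) (hm : 0 < m)
    (hlsc : LowerSemicontinuousOn F s) (hbdd : BddBelow (F '' s)) :
    ∃! x, x ∈ s ∧ IsMinOn F s x := by
  have hinf : ∀ z ∈ s, sInf (F '' s) ≤ F z := fun z hz => csInf_le hbdd (mem_image_of_mem F hz)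
  obtain ⟨y, -, hy, hyF⟩ := exists_seq_tendsto_sInf (hne.image F) hbdd
  choose u hus hFu using hyF
  have hlim : Tendsto (fun k => F (u k)) atTop (nhds (sInf (F '' s))) := by
    simpa only [hFu] using hy
  obtain ⟨x, hxs, hx⟩ := cauchySeq_tendsto_of_isComplete hs hus
    (cauchySeq_of_strongConvexOn hF hm hinf hus hlim)
  have hxu : Tendsto u atTop (nhdsWithin x s) :=
    tendsto_nhdsWithin_iff.2 ⟨hx, Eventually.of_forall hus⟩
  have hxinf : F x ≤ sInf (F '' s) :=
    le_of_forall_lt_imp_le_of_dense fun c hc =>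
      ge_of_tendsto hlim ((hxu.eventually (hlsc x hxs c hc)).mono fun _ => le_of_lt)
  have hxmin : IsMinOn F s x := fun z hz => hxinf.trans (hinf z hz)
  exact ⟨x, ⟨hxs, hxmin⟩, fun z hz =>
    (hF.strictConvexOn hm).eq_of_isMinOn hz.2 hxmin hz.1 hxs⟩

lemma strongConvexOn_mul_norm_sub_sq [InnerProductSpace ℝ V] (α : ℝ) (c : V) :
    StrongConvexOn univ (2 * α) fun x => α * ‖x - c‖ ^ 2 := by
  refine ⟨convex_univ, fun x _ y _ s t _ _ hst => le_of_eq ?_⟩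
  obtain rfl : t = 1 - s := by linarith
  have hcomb : s • x + (1 - s) • y - c = s • (x - c) + (1 - s) • (y - c) := by module
  have hdiff : x - y = (x - c) - (y - c) := by abel
  simp only [smul_eq_mul]
  rw [hcomb, hdiff, norm_add_sq_real, norm_sub_sq_real (x - c), real_inner_smul_left,
    real_inner_smul_right, norm_smul, norm_smul, mul_pow, mul_pow, Real.norm_eq_abs,
    Real.norm_eq_abs, sq_abs, sq_abs]
  ring

lemma strongConvexOn_prod [NormedSpace ℝ V] {A : Set V} {B : Set W} {m k : ℝ} {F : V → ℝ}
    {G : W → ℝ} (hm : 0 ≤ m) (hk : 0 ≤ k) (hF : StrongConvexOn A m F) (hG : StrongConvexOn B k G) :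
    StrongConvexOn (A ×ˢ B) (min m k) fun q : V × W => F q.1 + G q.2 := by
  refine ⟨hF.1.prod hG.1, fun p hp q hq s t hs ht hst => ?_⟩
  have hnorm : min m k * ‖p - q‖ ^ 2 ≤ m * ‖p.1 - q.1‖ ^ 2 + k * ‖p.2 - q.2‖ ^ 2 := by
    rw [Prod.norm_def]
    rcases max_cases ‖(p - q).1‖ ‖(p - q).2‖ with ⟨h, _⟩ | ⟨h, _⟩ <;> rw [h]
    · exact (mul_le_mul_of_nonneg_right (min_le_left m k) (sq_nonneg _)).trans
        (le_add_of_nonneg_right (by positivity))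
    · exact (mul_le_mul_of_nonneg_right (min_le_right m k) (sq_nonneg _)).trans
        (le_add_of_nonneg_left (by positivity))
  have hFpq := hF.2 hp.1 hq.1 hs ht hst
  have hGpq := hG.2 hp.2 hq.2 hs ht hst
  have hscaled := mul_le_mul_of_nonneg_left hnorm (mul_nonneg hs ht)
  simp only [smul_eq_mul, Prod.fst_add, Prod.snd_add, Prod.smul_fst, Prod.smul_snd] at hFpq hGpq ⊢
  linarith

end StrongConvexity

section LpFunctionals

variable {X : Type*} [MeasurableSpace X] {μ : Measure X} {E : Type*} [NormedAddCommGroup E]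

lemma integrable_norm_sq_coeFn_Lp (g : Lp E 2 μ) : Integrable (fun x => ‖g x‖ ^ 2) μ :=
  (Lp.memLp g).integrable_norm_pow two_ne_zero

lemma L2_norm_sq_eq_integral [InnerProductSpace ℝ E] (g : Lp E 2 μ) :
    ‖g‖ ^ 2 = ∫ x, ‖g x‖ ^ 2 ∂μ := by
  rw [← real_inner_self_eq_norm_sq, L2.inner_def]
  simp only [real_inner_self_eq_norm_sq]

variable [IsFiniteMeasure μ] {p : ℝ≥0∞} [Fact (1 ≤ p)]

lemma integrable_coeFn_Lp (g : Lp E p μ) : Integrable g μ :=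
  (Lp.memLp g).integrable Fact.out

lemma integrable_comp_of_lipschitzWith {F : Type*} [NormedAddCommGroup F] {K : NNReal} {φ : E → F}
    (hφ : LipschitzWith K φ) {g : X → E} (hg : Integrable g μ) :
    Integrable (fun x => φ (g x)) μ := by
  have hbound : Integrable (fun x => ‖φ 0‖ + K * ‖g x‖) μ :=
    (integrable_const _).add (hg.norm.const_mul _)
  refine hbound.mono' (hφ.continuous.comp_aestronglyMeasurable hg.1)
    (Eventually.of_forall fun x => ?_)
  calc ‖φ (g x)‖ ≤ ‖φ 0‖ + ‖φ (g x) - φ 0‖ := norm_le_norm_add_norm_sub' _ _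
    _ ≤ ‖φ 0‖ + K * ‖g x‖ := by simpa using hφ.norm_sub_le (g x) 0

lemma integral_norm_le_mul_Lp_norm (g : Lp E p μ) :
    ∫ x, ‖g x‖ ∂μ ≤ μ.real univ ^ (1 - 1 / p.toReal) * ‖g‖ := by
  have hexp : 0 ≤ 1 - 1 / p.toReal := by
    rcases ENNReal.dichotomy p with rfl | hp
    · simp
    · exact sub_nonneg.2 ((div_le_one (by positivity)).2 hp)
  have h := eLpNorm_le_eLpNorm_mul_rpow_measure_univ (Fact.out : 1 ≤ p) (Lp.memLp g).1
  rw [integral_norm_eq_lintegral_enorm (Lp.memLp g).1, ← eLpNorm_one_eq_lintegral_enorm,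
    Lp.norm_def, mul_comm, measureReal_def, ENNReal.toReal_rpow, ← ENNReal.toReal_mul]
  refine ENNReal.toReal_mono (ENNReal.mul_ne_top (Lp.memLp g).2.ne
    (ENNReal.rpow_ne_top_of_nonneg hexp (measure_ne_top _ _))) ?_
  simpa only [ENNReal.toReal_one, div_one] using h

lemma continuous_integral_comp_Lp {K : NNReal} {φ : E → ℝ} (hφ : LipschitzWith K φ) :
    Continuous fun g : Lp E p μ => ∫ x, φ (g x) ∂μ := by
  have hint (g : Lp E p μ) := integrable_comp_of_lipschitzWith hφ (integrable_coeFn_Lp g)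
  refine (LipschitzWith.of_dist_le' (K := K * μ.real univ ^ (1 - 1 / p.toReal))
    fun g h => ?_).continuous
  rw [Real.dist_eq, dist_eq_norm, ← integral_sub (hint g) (hint h)]
  calc |∫ x, (φ (g x) - φ (h x)) ∂μ| ≤ ∫ x, |φ (g x) - φ (h x)| ∂μ := abs_integral_le_integral_abs
    _ ≤ ∫ x, K * ‖(g - h) x‖ ∂μ := by
      refine integral_mono_ae ((hint g).sub (hint h)).abs
        ((integrable_coeFn_Lp (g - h)).norm.const_mul _) ?_
      filter_upwards [Lp.coeFn_sub g h] with x hx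
      rw [hx]
      exact hφ.norm_sub_le (g x) (h x)
    _ = K * ∫ x, ‖(g - h) x‖ ∂μ := integral_const_mul _ _
    _ ≤ K * μ.real univ ^ (1 - 1 / p.toReal) * ‖g - h‖ := by
      rw [mul_assoc]
      gcongr
      exact integral_norm_le_mul_Lp_norm _

lemma convexOn_integral_comp_Lp [NormedSpace ℝ E] {K : NNReal} {φ : E → ℝ}
    (hφ : LipschitzWith K φ) (hconv : ConvexOn ℝ univ φ) :
    ConvexOn ℝ univ fun g : Lp E p μ => ∫ x, φ (g x) ∂μ := by
  have hint (g : Lp E p μ) := integrable_comp_of_lipschitzWith hφ (integrable_coeFn_Lp g)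
  refine ⟨convex_univ, fun g _ h _ s t hs ht hst => ?_⟩
  simp only [smul_eq_mul]
  rw [← integral_const_mul, ← integral_const_mul,
    ← integral_add ((hint g).const_mul s) ((hint h).const_mul t)]
  refine integral_mono_ae (hint _) (((hint g).const_mul s).add ((hint h).const_mul t)) ?_
  filter_upwards [Lp.coeFn_add (s • g) (t • h), Lp.coeFn_smul s g, Lp.coeFn_smul t h]
    with x hadd hsg hth
  simp only [hadd, Pi.add_apply, hsg, hth, Pi.smul_apply]
  exact hconv.2 (mem_univ _) (mem_univ _) hs ht hst

/-- The convex energy `α ‖u - f‖² + ∫ ψ ‖u'‖ + β ‖u'‖²` on pairs `(u, u')` of independent `L²`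
functions; the two quadratic terms are written with `L²` norms. -/
def l2Energy (α β : ℝ) (ψ : ℝ → ℝ) (f : Lp E 2 μ) (q : Lp E 2 μ × Lp E 2 μ) : ℝ :=
  α * ‖q.1 - f‖ ^ 2 + ((∫ x, ψ ‖q.2 x‖ ∂μ) + β * ‖q.2‖ ^ 2)

variable {α β : ℝ} {ψ : ℝ → ℝ} {K : NNReal} (f : Lp E 2 μ)

lemma continuous_l2Energy (hψ : LipschitzWith K ψ) : Continuous (l2Energy α β ψ f) := by
  have hint : Continuous fun q : Lp E 2 μ × Lp E 2 μ => ∫ x, ψ ‖q.2 x‖ ∂μ :=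
    (continuous_integral_comp_Lp (hψ.comp lipschitzWith_one_norm)).comp continuous_snd
  unfold l2Energy
  fun_prop

lemma bddBelow_range_l2Energy (hα : 0 ≤ α) (hβ : 0 ≤ β) (hψ : LipschitzWith K ψ)
    (hmono : MonotoneOn ψ (Ici 0)) : BddBelow (range (l2Energy α β ψ f)) := by
  refine ⟨∫ _, ψ 0 ∂μ, forall_mem_range.2 fun q => ?_⟩
  have hint : ∫ _, ψ 0 ∂μ ≤ ∫ x, ψ ‖q.2 x‖ ∂μ :=
    integral_mono (integrable_const _)
      (integrable_comp_of_lipschitzWith hψ (integrable_coeFn_Lp q.2).norm)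
      fun x => hmono self_mem_Ici (norm_nonneg _) (norm_nonneg _)
  have hquad : 0 ≤ α * ‖q.1 - f‖ ^ 2 + β * ‖q.2‖ ^ 2 := by positivity
  unfold l2Energy
  linarith

lemma convexOn_comp_norm [NormedSpace ℝ E] (hconv : ConvexOn ℝ (Ici 0) ψ)
    (hmono : MonotoneOn ψ (Ici 0)) : ConvexOn ℝ univ fun v : E => ψ ‖v‖ := by
  refine ⟨convex_univ, fun v _ w _ s t hs ht hst => ?_⟩
  have hnorm : ‖s • v + t • w‖ ≤ s * ‖v‖ + t * ‖w‖ :=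
    convexOn_univ_norm.2 (mem_univ v) (mem_univ w) hs ht hst
  calc ψ ‖s • v + t • w‖ ≤ ψ (s * ‖v‖ + t * ‖w‖) :=
        hmono (norm_nonneg _) ((norm_nonneg _).trans hnorm) hnorm
    _ ≤ s * ψ ‖v‖ + t * ψ ‖w‖ := hconv.2 (norm_nonneg v) (norm_nonneg w) hs ht hst

lemma strongConvexOn_l2Energy [InnerProductSpace ℝ E] (hα : 0 ≤ α) (hβ : 0 ≤ β)
    (hψ : LipschitzWith K ψ) (hconv : ConvexOn ℝ (Ici 0) ψ) (hmono : MonotoneOn ψ (Ici 0)) :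
    StrongConvexOn univ (min (2 * α) (2 * β)) (l2Energy α β ψ f) := by
  have hderiv : StrongConvexOn univ (2 * β)
      fun g : Lp E 2 μ => (∫ x, ψ ‖g x‖ ∂μ) + β * ‖g‖ ^ 2 := by
    have hint := convexOn_integral_comp_Lp (μ := μ) (p := 2)
      (hψ.comp lipschitzWith_one_norm) (convexOn_comp_norm (E := E) hconv hmono)
    simpa [StrongConvexOn, Pi.add_def] using
      (uniformConvexOn_zero.2 hint).add (strongConvexOn_mul_norm_sub_sq β (0 : Lp E 2 μ))
  rw [← univ_prod_univ]
  exact strongConvexOn_prod (by positivity) (by positivity)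
    (strongConvexOn_mul_norm_sub_sq α f) hderiv

theorem existsUnique_isMinOn_l2Energy [InnerProductSpace ℝ E] {S : Set (Lp E 2 μ × Lp E 2 μ)}
    (hS : IsComplete S) (hne : S.Nonempty) (hSconv : Convex ℝ S) (hα : 0 < α) (hβ : 0 < β)
    (hψ : LipschitzWith K ψ) (hconv : ConvexOn ℝ (Ici 0) ψ) (hmono : MonotoneOn ψ (Ici 0)) :
    ∃! q, q ∈ S ∧ IsMinOn (l2Energy α β ψ f) S q := by
  have hstrong := strongConvexOn_l2Energy (μ := μ) f hα.le hβ.le hψ hconv hmono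
  exact existsUnique_isMinOn_of_strongConvexOn hS hne
    ⟨hSconv, fun x _ y _ => hstrong.2 (mem_univ x) (mem_univ y)⟩ (by positivity)
    ((continuous_l2Energy f hψ).lowerSemicontinuous.lowerSemicontinuousOn S)
    ((bddBelow_range_l2Energy f hα.le hβ.le hψ hmono).mono (image_subset_range _ _))

end LpFunctionals

section SobolevSpace

variable {E : Type*} [NormedAddCommGroup E] {a b x y : ℝ}

lemma intervalIntegrable_of_integrableOn_Ioo {g : ℝ → E} (hg : IntegrableOn g (Ioo a b))
    (hx : x ∈ Icc a b) (hy : y ∈ Icc a b) : IntervalIntegrable g volume x y := by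
  have hab : a ≤ b := hx.1.trans hx.2
  refine ((intervalIntegrable_iff_integrableOn_Ioo_of_le hab).2 hg).mono_set ?_
  rw [uIcc_of_le hab]
  exact uIcc_subset_Icc hx hy

lemma memLp_Ioo_of_continuousOn {w : ℝ → E} (hw : ContinuousOn w (Icc a b)) (p : ℝ≥0∞) :
    MemLp w p (volume.restrict (Ioo a b)) := by
  obtain ⟨C, hC⟩ := isCompact_Icc.exists_bound_of_continuousOn hw
  refine .of_bound ((hw.mono Ioo_subset_Icc_self).aestronglyMeasurable measurableSet_Ioo) C ?_
  filter_upwards [ae_restrict_mem measurableSet_Ioo] with x hx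
  exact hC x (Ioo_subset_Icc_self hx)

variable [NormedSpace ℝ E]

lemma intervalIntegral_congr_ae_Ioo {g h : ℝ → E} (hgh : g =ᵐ[volume.restrict (Ioo a b)] h)
    (hx : x ∈ Icc a b) (hy : y ∈ Icc a b) : ∫ t in x..y, g t = ∫ t in x..y, h t := by
  refine intervalIntegral.integral_congr_ae_restrict (ae_mono ?_ hgh)
  rw [restrict_Ioo_eq_restrict_Ioc]
  exact Measure.restrict_mono (Ioc_subset_Ioc (le_min hx.1 hy.1) (max_le hx.2 hy.2)) le_rfl

lemma continuousOn_primitive_of_integrableOn_Ioo {g : ℝ → E} (hg : IntegrableOn g (Ioo a b)) :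
    ContinuousOn (fun x => ∫ t in a..x, g t) (Icc a b) :=
  have hIcc : IntegrableOn g (Icc a b) :=
    (integrableOn_Icc_iff_integrableOn_Ioo (by finiteness) (by finiteness)).2 hg
  (intervalIntegral.continuousOn_primitive hIcc).congr
    fun _ hx => intervalIntegral.integral_of_le hx.1

lemma norm_primitive_le_integral_norm {g : ℝ → E} (hg : IntegrableOn g (Ioo a b))
    (hx : x ∈ Icc a b) : ‖∫ t in a..x, g t‖ ≤ ∫ t in Ioo a b, ‖g t‖ := by
  refine intervalIntegral.norm_integral_le_integral_norm_uIoc.trans ?_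
  rw [← integral_Ioc_eq_integral_Ioo, uIoc_of_le hx.1]
  exact setIntegral_mono_set ((integrableOn_Ioc_iff_integrableOn_Ioo (by finiteness)).2 hg.norm)
    (Eventually.of_forall fun _ => norm_nonneg _) (Ioc_subset_Ioc_right hx.2).eventuallyLE

variable {p : ℝ≥0∞} [Fact (1 ≤ p)]

lemma memLp_primitive (g : Lp E p (volume.restrict (Ioo a b))) :
    MemLp (fun x => ∫ t in a..x, g t) p (volume.restrict (Ioo a b)) :=
  memLp_Ioo_of_continuousOn (continuousOn_primitive_of_integrableOn_Ioo (integrable_coeFn_Lp g)) p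

variable (E a b p) in
/-- The Volterra operator `g ↦ (x ↦ ∫ t in a..x, g t)` on `Lᵖ((a, b), E)`. -/
def primitiveLp :
    Lp E p (volume.restrict (Ioo a b)) →L[ℝ] Lp E p (volume.restrict (Ioo a b)) :=
  LinearMap.mkContinuousOfExistsBound
    { toFun g := (memLp_primitive g).toLp
      map_add' g h := by
        rw [← MemLp.toLp_add]
        refine MemLp.toLp_congr _ _ ?_
        filter_upwards [ae_restrict_mem measurableSet_Ioo] with x hx
        have ha : a ∈ Icc a b := left_mem_Icc.2 (hx.1.trans hx.2).le
        have hx' := Ioo_subset_Icc_self hx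
        rw [intervalIntegral_congr_ae_Ioo (Lp.coeFn_add g h) ha hx']
        exact intervalIntegral.integral_add
          (intervalIntegrable_of_integrableOn_Ioo (integrable_coeFn_Lp g) ha hx')
          (intervalIntegrable_of_integrableOn_Ioo (integrable_coeFn_Lp h) ha hx')
      map_smul' c g := by
        rw [RingHom.id_apply, ← MemLp.toLp_const_smul]
        refine MemLp.toLp_congr _ _ ?_
        filter_upwards [ae_restrict_mem measurableSet_Ioo] with x hx
        have ha : a ∈ Icc a b := left_mem_Icc.2 (hx.1.trans hx.2).le
        rw [intervalIntegral_congr_ae_Ioo (Lp.coeFn_smul c g) ha (Ioo_subset_Icc_self hx)]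
        exact intervalIntegral.integral_smul c _ } <| by
    refine ⟨measureUnivNNReal (volume.restrict (Ioo a b)) ^ p.toReal⁻¹ *
      (volume.restrict (Ioo a b)).real univ ^ (1 - 1 / p.toReal), fun g => ?_⟩
    rw [mul_assoc]
    refine Lp.norm_le_of_ae_bound (by positivity) ?_
    filter_upwards [(memLp_primitive g).coeFn_toLp, ae_restrict_mem measurableSet_Ioo]
      with x hgx hx
    refine (congrArg norm hgx).trans_le ?_
    exact (norm_primitive_le_integral_norm (integrable_coeFn_Lp g) (Ioo_subset_Icc_self hx)).trans
      (integral_norm_le_mul_Lp_norm g)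

lemma coeFn_primitiveLp (g : Lp E p (volume.restrict (Ioo a b))) :
    primitiveLp E a b p g =ᵐ[volume.restrict (Ioo a b)] fun x => ∫ t in a..x, g t :=
  (memLp_primitive g).coeFn_toLp

variable (E a b p) in
/-- The Sobolev space `W^{1,p}((a, b), E)`, encoded as the space of pairs `(u, u')` in `Lᵖ × Lᵖ` for
which `u` and the primitive of `u'` differ by a constant. -/
def sobolevGraph :
    Submodule ℝ (Lp E p (volume.restrict (Ioo a b)) × Lp E p (volume.restrict (Ioo a b))) :=
  (Lp.constL p (volume.restrict (Ioo a b)) ℝ : E →L[ℝ] _).range.comap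
    (ContinuousLinearMap.fst ℝ _ _ -
      primitiveLp E a b p ∘L ContinuousLinearMap.snd ℝ _ _).toLinearMap

lemma mem_sobolevGraph_iff
    {q : Lp E p (volume.restrict (Ioo a b)) × Lp E p (volume.restrict (Ioo a b))} :
    q ∈ sobolevGraph E a b p ↔
      ∃ c, q.1 =ᵐ[volume.restrict (Ioo a b)] fun x => c + ∫ t in a..x, q.2 t := by
  have hmem : q ∈ sobolevGraph E a b p ↔
      ∃ c, Lp.const p (volume.restrict (Ioo a b)) c = q.1 - primitiveLp E a b p q.2 := Iff.rfl
  refine hmem.trans (exists_congr fun c => ?_)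
  rw [eq_sub_iff_add_eq, eq_comm, Lp.ext_iff]
  have hsum : ⇑(Lp.const p (volume.restrict (Ioo a b)) c + primitiveLp E a b p q.2)
      =ᵐ[volume.restrict (Ioo a b)] fun x => c + ∫ t in a..x, q.2 t :=
    (Lp.coeFn_add _ _).trans ((Lp.coeFn_const _ _ c).add (coeFn_primitiveLp q.2))
  exact ⟨fun h => h.trans hsum, fun h => h.trans hsum.symm⟩

lemma isClosed_range_Lp_constL {X : Type*} [MeasurableSpace X] {μ : Measure X} [IsFiniteMeasure μ]
    [NeZero μ] [CompleteSpace E] :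
    IsClosed (range (Lp.constL p μ ℝ : E →L[ℝ] Lp E p μ)) := by
  have hμ : 0 < μ.real univ ^ (1 / p.toReal) :=
    Real.rpow_pos_of_pos measureReal_univ_pos _
  have hp : p ≠ 0 := (zero_lt_one.trans_le Fact.out).ne'
  have hanti : AntilipschitzWith (μ.real univ ^ (1 / p.toReal))⁻¹.toNNReal
      (Lp.constL p μ ℝ : E →L[ℝ] Lp E p μ) := by
    refine ContinuousLinearMap.antilipschitz_of_bound _ fun c => ?_
    rw [Real.coe_toNNReal _ (inv_nonneg.2 hμ.le), le_inv_mul_iff₀ hμ, mul_comm]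
    exact (Lp.norm_const p μ c hp).ge
  exact hanti.isClosed_range (ContinuousLinearMap.uniformContinuous _)

lemma isClosed_sobolevGraph [CompleteSpace E] (hab : a < b) :
    IsClosed (sobolevGraph E a b p :
      Set (Lp E p (volume.restrict (Ioo a b)) × Lp E p (volume.restrict (Ioo a b)))) := by
  have : NeZero (volume.restrict (Ioo a b)) := ⟨by simp [Measure.restrict_eq_zero, hab]⟩
  exact isClosed_range_Lp_constL.preimage (ContinuousLinearMap.continuous _)

end SobolevSpace

section SmoothedAbs

lemma sqrt_sq_add_sq_eq_norm (ε s : ℝ) : √(s ^ 2 + ε ^ 2) = ‖(s + ε * Complex.I : ℂ)‖ :=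
  (Complex.norm_add_mul_I s ε).symm

lemma lipschitzWith_sqrt_sq_add_sq (ε : ℝ) : LipschitzWith 1 fun s : ℝ => √(s ^ 2 + ε ^ 2) := by
  refine LipschitzWith.of_dist_le_mul fun s t => ?_
  simp only [sqrt_sq_add_sq_eq_norm, Real.dist_eq, NNReal.coe_one, one_mul]
  refine (abs_norm_sub_norm_le _ _).trans_eq ?_
  rw [add_sub_add_right_eq_sub, ← Complex.ofReal_sub, Complex.norm_real, Real.norm_eq_abs]

lemma convexOn_sqrt_sq_add_sq (ε : ℝ) : ConvexOn ℝ univ fun s : ℝ => √(s ^ 2 + ε ^ 2) := by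
  simp only [sqrt_sq_add_sq_eq_norm]
  exact (convexOn_univ_norm.translate_left (ε * Complex.I)).comp_linearMap
    Complex.ofRealCLM.toLinearMap

lemma monotoneOn_sqrt_sq_add_sq (ε : ℝ) : MonotoneOn (fun s : ℝ => √(s ^ 2 + ε ^ 2)) (Ici 0) :=
  fun s (hs : 0 ≤ s) t _ hst => Real.sqrt_le_sqrt (by gcongr)

end SmoothedAbs

section Minimizers

variable {E : Type*} [NormedAddCommGroup E]

lemma integrable_norm_of_integrable_norm_sq {X : Type*} [MeasurableSpace X] {μ : Measure X}
    [IsFiniteMeasure μ] {g : X → E} (hg : Integrable (fun x => ‖g x‖ ^ 2) μ) :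
    Integrable (fun x => ‖g x‖) μ := by
  have hmeas : AEStronglyMeasurable (fun x => ‖g x‖) μ := by
    simpa only [Function.comp_def, Real.sqrt_sq (norm_nonneg _)] using
      Real.continuous_sqrt.comp_aestronglyMeasurable hg.1
  exact ((memLp_two_iff_integrable_sq hmeas).2 hg).integrable one_le_two

variable [NormedSpace ℝ E] {a b α β : ℝ} {ψ : ℝ → ℝ} {K : NNReal} {f w w' : ℝ → E}

/-- `w` is an `H¹` function on `(a, b)` with weak derivative `w'`. As in `InH1`, only `‖w'‖²` is
assumed to be integrable, so `w'` need not be measurable. -/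
def HasH1Deriv (a b : ℝ) (w w' : ℝ → E) : Prop :=
  ContinuousOn w (Icc a b) ∧ IntegrableOn (fun x => ‖w' x‖ ^ 2) (Ioo a b) ∧
    ∀ x ∈ Icc a b, ∀ y ∈ Icc a b, w y - w x = ∫ t in x..y, w' t

/-- The energy `∫ α ‖w - f‖² + ψ ‖w'‖ + β ‖w'‖²` over `(a, b)` of `w` with weak derivative `w'`. -/
def radialEnergy (α β : ℝ) (ψ : ℝ → ℝ) (a b : ℝ) (f w w' : ℝ → E) : ℝ :=
  ∫ x in Ioo a b, (α * ‖w x - f x‖ ^ 2 + ψ ‖w' x‖ + β * ‖w' x‖ ^ 2)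

/-- `u`, with weak derivative `u'`, minimizes `radialEnergy` over `H¹((a, b), E)`. -/
def IsRadialEnergyMinimizer (α β : ℝ) (ψ : ℝ → ℝ) (a b : ℝ) (f u u' : ℝ → E) : Prop :=
  HasH1Deriv a b u u' ∧ ∀ v v' : ℝ → E, HasH1Deriv a b v v' →
    radialEnergy α β ψ a b f u u' ≤ radialEnergy α β ψ a b f v v'

/- The Bochner integral of a non-integrable function is `0`, so a non-integrable derivative forces
`w` to be constant. -/
lemma HasH1Deriv.eq_left_of_not_integrableOn (hw : HasH1Deriv a b w w')
    (hw' : ¬IntegrableOn w' (Ioo a b)) {x : ℝ} (hx : x ∈ Icc a b) : w x = w a := by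
  have hab : a ≤ b := hx.1.trans hx.2
  have hnot : ¬IntervalIntegrable w' volume a b :=
    mt (intervalIntegrable_iff_integrableOn_Ioo_of_le hab).1 hw'
  have heq : ∀ y ∈ Icc a b, ∀ z ∈ Icc a b, ¬IntervalIntegrable w' volume y z → w z = w y :=
    fun y hy z hz h => sub_eq_zero.1 ((hw.2.2 y hy z hz).trans (intervalIntegral.integral_undef h))
  have ha := left_mem_Icc.2 hab
  have hb := right_mem_Icc.2 hab
  by_cases hax : IntervalIntegrable w' volume a x
  · have hxb : ¬IntervalIntegrable w' volume x b := fun hxb => hnot (hax.trans hxb)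
    exact (heq x hx b hb hxb).symm.trans (heq a ha b hb hnot)
  · exact heq a ha x hx hax

lemma HasH1Deriv.exists_aestronglyMeasurable (hw : HasH1Deriv a b w w') :
    ∃ g, AEStronglyMeasurable g (volume.restrict (Ioo a b)) ∧ HasH1Deriv a b w g ∧
      ∀ x, ‖g x‖ ≤ ‖w' x‖ := by
  by_cases hw' : IntegrableOn w' (Ioo a b)
  · exact ⟨w', hw'.1, hw, fun _ => le_rfl⟩
  · refine ⟨0, aestronglyMeasurable_zero, ⟨hw.1, by simp, fun x hx y hy => ?_⟩, by simp⟩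
    simp [hw.eq_left_of_not_integrableOn hw' hx, hw.eq_left_of_not_integrableOn hw' hy]

lemma HasH1Deriv.integrableOn_energyDensity (hw : HasH1Deriv a b w w')
    (hf : MemLp f 2 (volume.restrict (Ioo a b))) (hψ : LipschitzWith K ψ) :
    IntegrableOn (fun x => α * ‖w x - f x‖ ^ 2 + ψ ‖w' x‖ + β * ‖w' x‖ ^ 2) (Ioo a b) :=
  have hfid := ((memLp_Ioo_of_continuousOn hw.1 2).sub hf).integrable_norm_pow two_ne_zero
  have hψw' := integrable_comp_of_lipschitzWith hψ (integrable_norm_of_integrable_norm_sq hw.2.1)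
  ((hfid.const_mul α).add hψw').add (hw.2.1.const_mul β)

lemma radialEnergy_mono {v' : ℝ → E} (hv : HasH1Deriv a b w v') (hw : HasH1Deriv a b w w')
    (hf : MemLp f 2 (volume.restrict (Ioo a b))) (hψ : LipschitzWith K ψ)
    (hmono : MonotoneOn ψ (Ici 0)) (hβ : 0 ≤ β) (hle : ∀ x, ‖v' x‖ ≤ ‖w' x‖) :
    radialEnergy α β ψ a b f w v' ≤ radialEnergy α β ψ a b f w w' := by
  refine integral_mono (hv.integrableOn_energyDensity hf hψ)
    (hw.integrableOn_energyDensity hf hψ) fun x => ?_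
  have hψx : ψ ‖v' x‖ ≤ ψ ‖w' x‖ := hmono (norm_nonneg _) (norm_nonneg _) (hle x)
  dsimp only
  gcongr
  exact hle x

lemma exists_hasH1Deriv_of_mem_sobolevGraph
    {q : Lp E 2 (volume.restrict (Ioo a b)) × Lp E 2 (volume.restrict (Ioo a b))}
    (hq : q ∈ sobolevGraph E a b 2) :
    ∃ u, q.1 =ᵐ[volume.restrict (Ioo a b)] u ∧ HasH1Deriv a b u q.2 := by
  obtain ⟨c, hc⟩ := mem_sobolevGraph_iff.1 hq
  have hint : IntegrableOn q.2 (Ioo a b) := integrable_coeFn_Lp q.2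
  refine ⟨_, hc, continuousOn_const.add (continuousOn_primitive_of_integrableOn_Ioo hint),
    integrable_norm_sq_coeFn_Lp q.2, fun x hx y hy => ?_⟩
  have ha : a ∈ Icc a b := left_mem_Icc.2 (hx.1.trans hx.2)
  rw [add_sub_add_left_eq_sub]
  exact intervalIntegral.integral_interval_sub_left
    (intervalIntegrable_of_integrableOn_Ioo hint ha hy)
    (intervalIntegrable_of_integrableOn_Ioo hint ha hx)

lemma HasH1Deriv.toLp_mem_sobolevGraph (hw : HasH1Deriv a b w w')
    (hL : MemLp w 2 (volume.restrict (Ioo a b))) (hL' : MemLp w' 2 (volume.restrict (Ioo a b))) :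
    (hL.toLp, hL'.toLp) ∈ sobolevGraph E a b 2 := by
  refine mem_sobolevGraph_iff.2 ⟨w a, hL.coeFn_toLp.trans ?_⟩
  filter_upwards [ae_restrict_mem measurableSet_Ioo] with x hx
  have ha : a ∈ Icc a b := left_mem_Icc.2 (hx.1.trans hx.2).le
  rw [intervalIntegral_congr_ae_Ioo hL'.coeFn_toLp ha (Ioo_subset_Icc_self hx),
    ← hw.2.2 a ha x (Ioo_subset_Icc_self hx), add_sub_cancel]

end Minimizers

section Existence

variable {E : Type*} [NormedAddCommGroup E] [InnerProductSpace ℝ E] {a b α β : ℝ} {ψ : ℝ → ℝ}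
  {K : NNReal} {f w w' : ℝ → E}

lemma radialEnergy_eq_l2Energy (hf : MemLp f 2 (volume.restrict (Ioo a b)))
    (hψ : LipschitzWith K ψ)
    {q : Lp E 2 (volume.restrict (Ioo a b)) × Lp E 2 (volume.restrict (Ioo a b))}
    (hw : q.1 =ᵐ[volume.restrict (Ioo a b)] w) (hw' : q.2 =ᵐ[volume.restrict (Ioo a b)] w') :
    radialEnergy α β ψ a b f w w' = l2Energy α β ψ hf.toLp q := by
  have hfid := (integrable_norm_sq_coeFn_Lp (q.1 - hf.toLp)).const_mul α
  have hψq := integrable_comp_of_lipschitzWith hψ (integrable_coeFn_Lp q.2).norm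
  have hder := (integrable_norm_sq_coeFn_Lp q.2).const_mul β
  have hdensity : (fun x => α * ‖w x - f x‖ ^ 2 + ψ ‖w' x‖ + β * ‖w' x‖ ^ 2)
      =ᵐ[volume.restrict (Ioo a b)]
        fun x => α * ‖(q.1 - hf.toLp) x‖ ^ 2 + (ψ ‖q.2 x‖ + β * ‖q.2 x‖ ^ 2) := by
    filter_upwards [hw, hw', Lp.coeFn_sub q.1 hf.toLp, hf.coeFn_toLp] with x hx hx' hsub hfx
    rw [hsub, Pi.sub_apply, hx, hx', hfx, add_assoc]
  rw [radialEnergy, l2Energy, L2_norm_sq_eq_integral, L2_norm_sq_eq_integral,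
    integral_congr_ae hdensity, ← integral_const_mul, ← integral_const_mul,
    ← integral_add hψq hder]
  exact integral_add hfid (hψq.add hder)

lemma HasH1Deriv.exists_l2Energy_le (hw : HasH1Deriv a b w w')
    (hf : MemLp f 2 (volume.restrict (Ioo a b))) (hψ : LipschitzWith K ψ)
    (hmono : MonotoneOn ψ (Ici 0)) (hβ : 0 ≤ β) :
    ∃ q ∈ sobolevGraph E a b 2, q.1 =ᵐ[volume.restrict (Ioo a b)] w ∧
      l2Energy α β ψ hf.toLp q ≤ radialEnergy α β ψ a b f w w' := by
  obtain ⟨g, hg, hwg, hle⟩ := hw.exists_aestronglyMeasurable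
  have hL := memLp_Ioo_of_continuousOn hw.1 2
  have hL' := (memLp_two_iff_integrable_sq_norm hg).2 hwg.2.1
  refine ⟨_, hwg.toLp_mem_sobolevGraph hL hL', hL.coeFn_toLp, ?_⟩
  rw [← radialEnergy_eq_l2Energy hf hψ hL.coeFn_toLp hL'.coeFn_toLp]
  exact radialEnergy_mono hwg hw hf hψ hmono hβ hle

theorem regEnergy_exists_unique_minimizer_general [CompleteSpace E] (hab : a < b) (hα : 0 < α)
    (hβ : 0 < β) (hψ : LipschitzWith K ψ) (hconv : ConvexOn ℝ (Ici 0) ψ)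
    (hmono : MonotoneOn ψ (Ici 0)) (hf : MemLp f 2 (volume.restrict (Ioo a b))) :
    (∃ u u', IsRadialEnergyMinimizer α β ψ a b f u u') ∧
      ∀ u₁ u₁' u₂ u₂', IsRadialEnergyMinimizer α β ψ a b f u₁ u₁' →
        IsRadialEnergyMinimizer α β ψ a b f u₂ u₂' → EqOn u₁ u₂ (Icc a b) := by
  obtain ⟨q, ⟨hqS, hqmin⟩, hquniq⟩ := existsUnique_isMinOn_l2Energy hf.toLp
    (isClosed_sobolevGraph (E := E) (p := 2) hab).isComplete (Submodule.nonempty _)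
    (Submodule.convex _) hα hβ hψ hconv hmono
  obtain ⟨u, hqu, hu⟩ := exists_hasH1Deriv_of_mem_sobolevGraph hqS
  have huq := radialEnergy_eq_l2Energy (α := α) (β := β) hf hψ hqu (ae_eq_refl q.2)
  have hae : ∀ v v', IsRadialEnergyMinimizer α β ψ a b f v v' →
      v =ᵐ[volume.restrict (Ioo a b)] q.1 := by
    intro v v' hv
    obtain ⟨r, hrS, hrv, hr⟩ := hv.1.exists_l2Energy_le hf hψ hmono hβ.le
    have hrmin : IsMinOn (l2Energy α β ψ hf.toLp) (sobolevGraph E a b 2) r := fun z hz =>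
      (hr.trans ((hv.2 u q.2 hu).trans_eq huq)).trans (hqmin hz)
    exact hquniq r ⟨hrS, hrmin⟩ ▸ hrv.symm
  refine ⟨⟨u, q.2, hu, fun v v' hv => ?_⟩, fun u₁ u₁' u₂ u₂' h₁ h₂ => ?_⟩
  · obtain ⟨r, hrS, -, hr⟩ := hv.exists_l2Energy_le hf hψ hmono hβ.le
    exact huq.trans_le ((hqmin hrS).trans hr)
  · refine Measure.eqOn_Icc_of_ae_eq volume hab.ne ?_ h₁.1.1 h₂.1.1
    rw [← restrict_Ioo_eq_restrict_Icc]
    exact (hae u₁ u₁' h₁).trans (hae u₂ u₂' h₂).symm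

end Existence

/-- for every `ε > 0` the regularized energy `E_ε` admits a minimizer over
`H¹(I,ℝⁿ)`, unique in the sense that two minimizers agree on `[a,b]`. -/
theorem regEnergy_exists_unique_minimizer
    {n : ℕ} (hn : 1 ≤ n) (a b : ℝ) (hab : a < b) (lam : ℝ) (hlam : 0 < lam)
    (ε : ℝ) (hε : 0 < ε)
    (f : ℝ → EuclideanSpace ℝ (Fin n)) (hf_meas : Measurable f)
    (hf_sq : SqIntOn f (Set.Ioo a b)) :
    (∃ u u' : ℝ → EuclideanSpace ℝ (Fin n), IsMinimizerEps lam ε a b f u u') ∧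
    ∀ u₁ u₁' u₂ u₂' : ℝ → EuclideanSpace ℝ (Fin n),
      IsMinimizerEps lam ε a b f u₁ u₁' → IsMinimizerEps lam ε a b f u₂ u₂' →
      Set.EqOn u₁ u₂ (Set.Icc a b) := by
  exact regEnergy_exists_unique_minimizer_general (α := 1 / (2 * lam)) (β := ε ^ 2 / 2) hab
    (by positivity) (by positivity) (lipschitzWith_sqrt_sq_add_sq ε)
    ((convexOn_sqrt_sq_add_sq ε).subset (subset_univ _) (convex_Ici 0))
    (monotoneOn_sqrt_sq_add_sq ε)
    ((memLp_two_iff_integrable_sq_norm hf_meas.aestronglyMeasurable).2 hf_sq)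
end
end

section
/- Suppose f ∈ H¹(I,ℝⁿ) with derivative f', and let u be a minimizer of E_ε over H¹(I,ℝⁿ), with derivative u'. Then u' has an absolutely continuous representative vanishing at both endpoints a and b, the vector field x ↦ u'(x)/|u'(x)|_ε + ε² u'(x) is absolutely continuous on [a,b], and for almost every x ∈ I its derivative equals (1/λ)(u(x) − f(x)); that is, u is a strong solution of the Euler–Lagrange system (1/λ)(u − f) = (u'/|u'|_ε)' + ε² u'' on I with Neumann boundary conditions u'(a) = u'(b) = 0. -/
open MeasureTheory Set Filter
open scoped ENNReal

noncomputable section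

/-!
The integrand of `E_ε` depends on the derivative through the strongly convex function
`p ↦ |p|_ε + (ε²/2)‖p‖²`. Its gradient `F p = p/|p|_ε + ε² p` has at most linear growth, and strong
monotonicity makes `F` a bijection of `ℝⁿ` with Lipschitz inverse. Expanding the energy to second
order around `u` gives the weak Euler–Lagrange equation `∫ ⟨(u - f)/λ, η⟩ + ⟨F u', η'⟩ = 0`, so by
du Bois-Reymond `F u'` is a.e. the primitive `H x = ∫_a^x (u - f)/λ`. As test functions are not
required to vanish at the endpoints, also `H b = 0`. Finally `F⁻¹ ∘ H` is absolutely continuous and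
represents `u'`, and `F⁻¹ 0 = 0` gives the Neumann conditions.
-/

section AbsoluteContinuity

variable {E : Type*} [NormedAddCommGroup E] [NormedSpace ℝ E] {a b : ℝ}

lemma absolutelyContinuousOnInterval_of_dist_le_mul {X Y : Type*} [PseudoMetricSpace X]
    [PseudoMetricSpace Y] {f : ℝ → X} {g : ℝ → Y} {C : ℝ}
    (hg : AbsolutelyContinuousOnInterval g a b)
    (hfg : ∀ x ∈ uIcc a b, ∀ y ∈ uIcc a b, dist (f x) (f y) ≤ C * dist (g x) (g y)) :
    AbsolutelyContinuousOnInterval f a b := by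
  have hCg := Tendsto.const_mul C hg
  rw [mul_zero] at hCg
  refine squeeze_zero' (Eventually.of_forall fun _ ↦ by positivity) ?_ hCg
  filter_upwards [mem_inf_of_right (mem_principal_self _)] with I hI
  rw [Finset.mul_sum]
  exact Finset.sum_le_sum fun i hi ↦ hfg _ (hI.1 i hi).1 _ (hI.1 i hi).2

lemma absolutelyContinuousOnInterval_lipschitzWith_comp {X Y : Type*} [PseudoMetricSpace X]
    [PseudoMetricSpace Y] {g : X → Y} {f : ℝ → X} {K : NNReal} (hg : LipschitzWith K g)
    (hf : AbsolutelyContinuousOnInterval f a b) :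
    AbsolutelyContinuousOnInterval (fun x ↦ g (f x)) a b :=
  absolutelyContinuousOnInterval_of_dist_le_mul hf fun _ _ _ _ ↦ hg.dist_le_mul _ _

lemma absolutelyContinuousOnInterval_primitive {k : ℝ → E}
    (hk : IntervalIntegrable k volume a b) :
    AbsolutelyContinuousOnInterval (fun x ↦ ∫ t in a..x, k t) a b := by
  have hN := hk.norm.absolutelyContinuousOnInterval_intervalIntegral left_mem_uIcc
  refine absolutelyContinuousOnInterval_of_dist_le_mul (C := 1) hN fun x hx y hy ↦ ?_
  have hax := hk.mono_set (uIcc_subset_uIcc_left hx)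
  have hay := hk.mono_set (uIcc_subset_uIcc_left hy)
  rw [one_mul, dist_comm, dist_comm (∫ t in a..x, ‖k t‖), dist_eq_norm, Real.dist_eq,
    intervalIntegral.integral_interval_sub_left hay hax,
    intervalIntegral.integral_interval_sub_left hay.norm hax.norm]
  exact intervalIntegral.norm_integral_le_abs_integral_norm

lemma integral_eq_sub_of_absolutelyContinuousOnInterval [CompleteSpace E] {f f' : ℝ → E}
    (hf : AbsolutelyContinuousOnInterval f a b)
    (hderiv : ∀ᵐ x, x ∈ uIcc a b → HasDerivAt f (f' x) x)
    (hf' : IntervalIntegrable f' volume a b) :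
    ∫ x in a..b, f' x = f b - f a := by
  obtain ⟨c, hc⟩ := (hf.fun_sub (absolutelyContinuousOnInterval_primitive hf')
    ).const_of_ae_hasDerivAt_zero <| by
      filter_upwards [hderiv, hf'.ae_hasDerivAt_integral] with x hfx hprim hx
      simpa only [sub_self] using (hfx hx).fun_sub (hprim hx a left_mem_uIcc)
  have hac := hc a left_mem_uIcc
  rw [intervalIntegral.integral_same, sub_zero] at hac
  rw [hac, ← hc b right_mem_uIcc, sub_sub_cancel]

section FiniteDimensional

variable [FiniteDimensional ℝ E]

lemma intervalIntegrable_deriv_of_absolutelyContinuousOnInterval {f : ℝ → E}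
    (hf : AbsolutelyContinuousOnInterval f a b) : IntervalIntegrable (deriv f) volume a b := by
  let e : E ≃L[ℝ] EuclideanSpace ℝ (Fin (Module.finrank ℝ E)) := toEuclidean
  have hcoord (i) : IntegrableOn (fun x ↦ e (deriv f x) i) (uIoc a b) := by
    let ℓ : E →L[ℝ] ℝ := (EuclideanSpace.proj i).comp (e : E →L[ℝ] _)
    have hℓf := absolutelyContinuousOnInterval_lipschitzWith_comp ℓ.lipschitz hf
    refine (intervalIntegrable_iff.1 hℓf.intervalIntegrable_deriv).congr ?_
    rw [EventuallyEq, ae_restrict_iff' measurableSet_uIoc]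
    filter_upwards [hf.boundedVariationOn.ae_differentiableAt_of_mem_uIcc] with x hfx hx
    exact (ℓ.hasFDerivAt.comp_hasDerivAt x (hfx (uIoc_subset_uIcc hx)).hasDerivAt).deriv
  rw [intervalIntegrable_iff]
  exact e.integrable_comp_iff.1 (Integrable.of_eval_piLp hcoord)

lemma integral_deriv_eq_sub_of_absolutelyContinuousOnInterval {f : ℝ → E}
    (hf : AbsolutelyContinuousOnInterval f a b) : ∫ x in a..b, deriv f x = f b - f a := by
  have := FiniteDimensional.complete ℝ E
  refine integral_eq_sub_of_absolutelyContinuousOnInterval hf ?_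
    (intervalIntegrable_deriv_of_absolutelyContinuousOnInterval hf)
  filter_upwards [hf.boundedVariationOn.ae_differentiableAt_of_mem_uIcc] with x hfx hx
  exact (hfx hx).hasDerivAt

end FiniteDimensional

end AbsoluteContinuity

section DuBoisReymond

variable {E : Type*} [NormedAddCommGroup E] [NormedSpace ℝ E] [CompleteSpace E] {a b : ℝ}
  {k F : ℝ → E}

lemma integral_smul_add_deriv_smul_primitive (hk : IntervalIntegrable k volume a b)
    {φ φ' : ℝ → ℝ} (hφ : ∀ x, HasDerivAt φ (φ' x) x) (hφ' : Continuous φ') :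
    ∫ x in a..b, (φ x • k x + φ' x • ∫ t in a..x, k t) = φ b • ∫ t in a..b, k t := by
  have hφ1 : ContDiff ℝ 1 φ := contDiff_one_iff_deriv.2
    ⟨fun x ↦ (hφ x).differentiableAt, by rwa [funext fun x ↦ (hφ x).deriv]⟩
  have hH := absolutelyContinuousOnInterval_primitive hk
  rw [integral_eq_sub_of_absolutelyContinuousOnInterval (f := fun x ↦ φ x • ∫ t in a..x, k t)
      (hφ1.contDiffOn.absolutelyContinuousOnInterval.fun_smul hH),
    intervalIntegral.integral_same, smul_zero, sub_zero]
  · filter_upwards [hk.ae_hasDerivAt_integral] with x hx hxab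
    exact (hφ x).smul (hx hxab a left_mem_uIcc)
  · exact (hk.continuousOn_smul hφ1.continuous.continuousOn).add
      (hH.continuousOn.intervalIntegrable.continuousOn_smul hφ'.continuousOn)

lemma ae_eq_zero_of_forall_integral_continuous_smul_eq_zero {G : ℝ → E} (hab : a ≤ b)
    (hG : IntervalIntegrable G volume a b)
    (h : ∀ ψ : ℝ → ℝ, Continuous ψ → ∫ x in a..b, ψ x • G x = 0) :
    ∀ᵐ x ∂volume.restrict (Ioo a b), G x = 0 := by
  have hloc : LocallyIntegrableOn G (Ioo a b) :=
    ((intervalIntegrable_iff_integrableOn_Ioo_of_le hab).1 hG).locallyIntegrableOn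
  rw [ae_restrict_iff' measurableSet_Ioo]
  refine isOpen_Ioo.ae_eq_zero_of_integral_contDiff_smul_eq_zero hloc fun ψ hψ _ hsupp ↦ ?_
  have hψ0 := h ψ hψ.continuous
  rwa [intervalIntegral.integral_of_le hab, integral_Ioc_eq_integral_Ioo,
    setIntegral_eq_integral_of_forall_compl_eq_zero fun x hx ↦ ?_] at hψ0
  rw [image_eq_zero_of_notMem_tsupport (fun hxψ ↦ hx (hsupp hxψ)), zero_smul]

lemma du_bois_reymond (hab : a ≤ b)
    (hk : IntervalIntegrable k volume a b) (hF : IntervalIntegrable F volume a b)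
    (h : ∀ φ φ' : ℝ → ℝ, (∀ x, HasDerivAt φ (φ' x) x) → Continuous φ' →
      ∫ x in a..b, (φ x • k x + φ' x • F x) = 0) :
    ∫ x in a..b, k x = 0 ∧ ∀ᵐ x ∂volume.restrict (Ioo a b), F x = ∫ t in a..x, k t := by
  have hkb : ∫ x in a..b, k x = 0 := by
    simpa only [one_smul, zero_smul, add_zero] using
      h (fun _ ↦ 1) (fun _ ↦ 0) (fun x ↦ hasDerivAt_const x 1) continuous_const
  refine ⟨hkb, ?_⟩
  have hH : IntervalIntegrable (fun x ↦ ∫ t in a..x, k t) volume a b :=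
    (absolutelyContinuousOnInterval_primitive hk).continuousOn.intervalIntegrable
  refine (ae_eq_zero_of_forall_integral_continuous_smul_eq_zero hab (hF.sub hH)
    fun ψ hψ ↦ ?_).mono fun x hx ↦ sub_eq_zero.1 hx
  let φ : ℝ → ℝ := fun x ↦ ∫ t in a..x, ψ t
  have hφ (x) : HasDerivAt φ (ψ x) x := hψ.integral_hasStrictDerivAt a x |>.hasDerivAt
  have hφc : Continuous φ := continuous_iff_continuousAt.2 fun x ↦ (hφ x).continuousAt
  have hφk := hk.continuousOn_smul hφc.continuousOn
  calc ∫ x in a..b, ψ x • (F x - ∫ t in a..x, k t)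
      = ∫ x in a..b, ((φ x • k x + ψ x • F x) - (φ x • k x + ψ x • ∫ t in a..x, k t)) := by
        simp only [add_sub_add_left_eq_sub, smul_sub]
    _ = 0 := by
        rw [intervalIntegral.integral_sub (hφk.add (hF.continuousOn_smul hψ.continuousOn))
          (hφk.add (hH.continuousOn_smul hψ.continuousOn)), h φ ψ hφ hψ,
          integral_smul_add_deriv_smul_primitive hk hφ hψ, hkb, smul_zero, sub_zero]

end DuBoisReymond

section RegularizedDensity

lemma abs_le_sqrt_norm_sq_add_sq {E : Type*} [SeminormedAddGroup E] (ε : ℝ) (p : E) :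
    |ε| ≤ Real.sqrt (‖p‖ ^ 2 + ε ^ 2) :=
  Real.abs_le_sqrt (le_add_of_nonneg_left (sq_nonneg _))

variable {E : Type*} [NormedAddCommGroup E] [InnerProductSpace ℝ E] {ε : ℝ}

/-- The density `p ↦ |p|_ε + (ε²/2)‖p‖²` through which the derivative enters the energy `E_ε`. -/
def regDensity (ε : ℝ) (p : E) : ℝ :=
  Real.sqrt (‖p‖ ^ 2 + ε ^ 2) + (ε ^ 2 / 2) * ‖p‖ ^ 2

/-- The flux `p ↦ p/|p|_ε + ε² p`, which is the gradient of `regDensity ε`. -/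
def regFlux (ε : ℝ) (p : E) : E :=
  (Real.sqrt (‖p‖ ^ 2 + ε ^ 2))⁻¹ • p + ε ^ 2 • p

lemma regFlux_zero : regFlux ε (0 : E) = 0 := by
  simp only [regFlux, smul_zero, add_zero]

lemma regFlux_eq_smul (p : E) :
    regFlux ε p = ((Real.sqrt (‖p‖ ^ 2 + ε ^ 2))⁻¹ + ε ^ 2) • p :=
  (add_smul _ _ p).symm

lemma continuous_regFlux (hε : ε ≠ 0) : Continuous (regFlux ε : E → E) := by
  have hne (p : E) : Real.sqrt (‖p‖ ^ 2 + ε ^ 2) ≠ 0 := by positivity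
  unfold regFlux
  fun_prop (disch := exact hne _)

lemma norm_regFlux_le (hε : ε ≠ 0) (p : E) : ‖regFlux ε p‖ ≤ (|ε|⁻¹ + ε ^ 2) * ‖p‖ := by
  rw [regFlux_eq_smul, norm_smul, Real.norm_of_nonneg (by positivity)]
  gcongr
  exact abs_le_sqrt_norm_sq_add_sq ε p

lemma regDensity_add_le (hε : ε ≠ 0) (p q : E) :
    regDensity ε (p + q) ≤
      regDensity ε p + inner ℝ (regFlux ε p) q + ((2 * |ε|)⁻¹ + ε ^ 2 / 2) * ‖q‖ ^ 2 := by
  have hεs := abs_le_sqrt_norm_sq_add_sq ε p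
  have hs := Real.sq_sqrt (show 0 ≤ ‖p‖ ^ 2 + ε ^ 2 by positivity)
  have hr := Real.sq_sqrt (show 0 ≤ ‖p + q‖ ^ 2 + ε ^ 2 by positivity)
  simp only [regDensity, regFlux_eq_smul, real_inner_smul_left]
  have hpq := norm_add_sq_real p q
  set s := Real.sqrt (‖p‖ ^ 2 + ε ^ 2)
  set r := Real.sqrt (‖p + q‖ ^ 2 + ε ^ 2)
  have hs0 : 0 < s := (abs_pos.2 hε).trans_le hεs
  -- the tangent line of the concave square root at `s²` lies above its graph
  have htangent : r ≤ s + s⁻¹ * inner ℝ p q + (2 * s)⁻¹ * ‖q‖ ^ 2 := by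
    have hgap : s + s⁻¹ * inner ℝ p q + (2 * s)⁻¹ * ‖q‖ ^ 2 - r = (r - s) ^ 2 / (2 * s) := by
      field_simp
      linarith
    exact sub_nonneg.1 (hgap ▸ by positivity)
  have hcoeff : (2 * s)⁻¹ * ‖q‖ ^ 2 ≤ (2 * |ε|)⁻¹ * ‖q‖ ^ 2 := by gcongr
  rw [hpq]
  linarith

lemma regDensity_add_inner_regFlux_add_le (hε : ε ≠ 0) (p q : E) :
    regDensity ε p + inner ℝ (regFlux ε p) (q - p) + ε ^ 2 / 2 * ‖q - p‖ ^ 2 ≤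
      regDensity ε q := by
  have hs := Real.sq_sqrt (show 0 ≤ ‖p‖ ^ 2 + ε ^ 2 by positivity)
  have hr := Real.sq_sqrt (show 0 ≤ ‖q‖ ^ 2 + ε ^ 2 by positivity)
  have hs0 : 0 < Real.sqrt (‖p‖ ^ 2 + ε ^ 2) := by positivity
  simp only [regDensity, regFlux_eq_smul, real_inner_smul_left, inner_sub_right,
    real_inner_self_eq_norm_sq, norm_sub_sq_real, real_inner_comm p q]
  set s := Real.sqrt (‖p‖ ^ 2 + ε ^ 2)
  set r := Real.sqrt (‖q‖ ^ 2 + ε ^ 2)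
  -- Cauchy–Schwarz for the vectors `(p, ε)` and `(q, ε)`
  have hcs : inner ℝ p q + ε ^ 2 ≤ s * r := by
    refine (add_le_add_left (real_inner_le_norm p q) _).trans ?_
    refine le_of_sq_le_sq ?_ (by positivity)
    nlinarith [sq_nonneg (ε * (‖p‖ - ‖q‖))]
  have htangent : s⁻¹ * (inner ℝ p q - ‖p‖ ^ 2) ≤ r - s := by
    rw [inv_mul_le_iff₀ hs0]
    linarith
  linarith

lemma sq_mul_norm_sub_sq_le_inner_regFlux_sub (hε : ε ≠ 0) (p q : E) :
    ε ^ 2 * ‖p - q‖ ^ 2 ≤ inner ℝ (regFlux ε p - regFlux ε q) (p - q) := by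
  have hpq := regDensity_add_inner_regFlux_add_le hε p q
  have hqp := regDensity_add_inner_regFlux_add_le hε q p
  rw [norm_sub_rev, ← neg_sub p q, inner_neg_right] at hpq
  rw [inner_sub_left]
  linarith

lemma antilipschitzWith_regFlux (hε : ε ≠ 0) :
    AntilipschitzWith ‖ε ^ 2‖₊⁻¹ (regFlux ε : E → E) := by
  refine AntilipschitzWith.of_le_mul_dist fun p q ↦ ?_
  have hmono := (sq_mul_norm_sub_sq_le_inner_regFlux_sub hε p q).trans (real_inner_le_norm _ _)
  rw [NNReal.coe_inv, coe_nnnorm, norm_pow, Real.norm_eq_abs, sq_abs, dist_eq_norm, dist_eq_norm,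
    le_inv_mul_iff₀ (by positivity)]
  rcases (norm_nonneg (p - q)).eq_or_lt with hpq | hpq
  · rw [← hpq, mul_zero]
    exact norm_nonneg _
  · exact le_of_mul_le_mul_right (by linarith) hpq

/-- On the ray through `y` the flux is a continuous real function that starts at `0` and grows at
least linearly. -/
lemma surjective_regFlux (hε : ε ≠ 0) : Function.Surjective (regFlux ε : E → E) := by
  intro y
  have hcont : Continuous fun t : ℝ ↦ ((Real.sqrt (‖t • y‖ ^ 2 + ε ^ 2))⁻¹ + ε ^ 2) * t := by
    have hne (t : ℝ) : Real.sqrt (‖t • y‖ ^ 2 + ε ^ 2) ≠ 0 := by positivity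
    fun_prop (disch := exact hne _)
  have hone : 1 ∈ Icc (((Real.sqrt (‖(0 : ℝ) • y‖ ^ 2 + ε ^ 2))⁻¹ + ε ^ 2) * 0)
      (((Real.sqrt (‖(ε ^ 2)⁻¹ • y‖ ^ 2 + ε ^ 2))⁻¹ + ε ^ 2) * (ε ^ 2)⁻¹) := by
    rw [mul_zero, add_mul, mul_inv_cancel₀ (pow_ne_zero 2 hε)]
    exact ⟨zero_le_one, le_add_of_nonneg_left (by positivity)⟩
  obtain ⟨t, -, ht⟩ := intermediate_value_Icc (by positivity) hcont.continuousOn hone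
  dsimp only at ht
  exact ⟨t • y, by rw [regFlux_eq_smul, smul_smul, ht, one_smul]⟩

/-- The flux `regFlux ε` as a bijection; its inverse recovers the derivative from the flux. -/
def regFluxEquiv (E : Type*) [NormedAddCommGroup E] [InnerProductSpace ℝ E] (hε : ε ≠ 0) : E ≃ E :=
  Equiv.ofBijective (regFlux ε) ⟨(antilipschitzWith_regFlux hε).injective, surjective_regFlux hε⟩

lemma regFlux_regFluxEquiv_symm (hε : ε ≠ 0) (y : E) :
    regFlux ε ((regFluxEquiv E hε).symm y) = y :=
  (regFluxEquiv E hε).apply_symm_apply y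

lemma regFluxEquiv_symm_regFlux (hε : ε ≠ 0) (p : E) :
    (regFluxEquiv E hε).symm (regFlux ε p) = p :=
  (regFluxEquiv E hε).symm_apply_apply p

lemma regFluxEquiv_symm_zero (hε : ε ≠ 0) : (regFluxEquiv E hε).symm 0 = 0 := by
  simpa only [regFlux_zero] using regFluxEquiv_symm_regFlux hε (0 : E)

lemma lipschitzWith_regFluxEquiv_symm (hε : ε ≠ 0) :
    LipschitzWith ‖ε ^ 2‖₊⁻¹ (regFluxEquiv E hε).symm :=
  (antilipschitzWith_regFlux hε).to_rightInverse (regFlux_regFluxEquiv_symm hε)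

end RegularizedDensity

section SquareIntegrable

variable {α E : Type*} [MeasurableSpace α] [NormedAddCommGroup E] [InnerProductSpace ℝ E]
  {μ : Measure α} {ε : ℝ}

lemma integrable_inner_of_memLp_two {w z : α → E} (hw : MemLp w 2 μ) (hz : MemLp z 2 μ) :
    Integrable (fun x ↦ inner ℝ (w x) (z x)) μ :=
  (hw.norm.integrable_mul hz.norm).mono' (hw.1.inner hz.1)
    (Eventually.of_forall fun x ↦ norm_inner_le_norm (w x) (z x))

lemma memLp_two_regFlux_comp (hε : ε ≠ 0) {w : α → E} (hw : MemLp w 2 μ) :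
    MemLp (fun x ↦ regFlux ε (w x)) 2 μ :=
  hw.of_le_mul ((continuous_regFlux hε).comp_aestronglyMeasurable hw.1)
    (Eventually.of_forall fun x ↦ norm_regFlux_le hε (w x))

lemma integrable_regDensity_comp [IsFiniteMeasure μ] (hε : ε ≠ 0) {w : α → E}
    (hw : Integrable (fun x ↦ ‖w x‖ ^ 2) μ) : Integrable (fun x ↦ regDensity ε (w x)) μ := by
  have hbound := (integrable_const (regDensity ε (0 : E))).add
    (hw.const_mul ((2 * |ε|)⁻¹ + ε ^ 2 / 2))
  refine hbound.mono' ?_ (Eventually.of_forall fun x ↦ ?_)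
  · exact (Real.continuous_sqrt.comp_aestronglyMeasurable
      (hw.1.add aestronglyMeasurable_const)).add (hw.1.const_mul _)
  · rw [Real.norm_of_nonneg (by unfold regDensity; positivity)]
    simpa only [Pi.add_apply, zero_add, regFlux_zero, inner_zero_left, add_zero] using
      regDensity_add_le hε 0 (w x)

end SquareIntegrable

section Energy

lemma memLp_of_continuousOn_Icc {E : Type*} [NormedAddCommGroup E] {a b : ℝ} {w : ℝ → E}
    (hw : ContinuousOn w (Icc a b)) (p : ℝ≥0∞) : MemLp w p (volume.restrict (Ioo a b)) := by
  obtain ⟨C, hC⟩ := isCompact_Icc.exists_bound_of_continuousOn hw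
  refine MemLp.of_bound
    ((hw.mono Ioo_subset_Icc_self).aestronglyMeasurable measurableSet_Ioo) C ?_
  filter_upwards [ae_restrict_mem measurableSet_Ioo] with x hx using hC x (Ioo_subset_Icc_self hx)

lemma intervalIntegrable_of_memLp {E : Type*} [NormedAddCommGroup E] {a b : ℝ} {w : ℝ → E}
    {p : ℝ≥0∞} (hp : 1 ≤ p) (hab : a ≤ b) (hw : MemLp w p (volume.restrict (Ioo a b))) :
    IntervalIntegrable w volume a b :=
  (intervalIntegrable_iff_integrableOn_Ioo_of_le hab).2 (hw.integrable hp)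

variable {n : ℕ} {a b lam ε : ℝ} {f u u' w w' η η' : ℝ → EuclideanSpace ℝ (Fin n)}

lemma regEnergy_eq_integral_regDensity :
    regEnergy lam ε a b f w w' =
      ∫ x in Ioo a b, (1 / (2 * lam) * ‖w x - f x‖ ^ 2 + regDensity ε (w' x)) := by
  simp only [regEnergy, regDensity, add_assoc]

lemma integrableOn_add_regDensity (hε : ε ≠ 0)
    (hwf : MemLp (fun x ↦ w x - f x) 2 (volume.restrict (Ioo a b)))
    (hw' : IntegrableOn (fun x ↦ ‖w' x‖ ^ 2) (Ioo a b)) :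
    IntegrableOn (fun x ↦ 1 / (2 * lam) * ‖w x - f x‖ ^ 2 + regDensity ε (w' x)) (Ioo a b) :=
  ((hwf.integrable_norm_pow two_ne_zero).const_mul _).add (integrable_regDensity_comp hε hw')

lemma InH1.of_hasDerivAt (hη : ∀ x, HasDerivAt η (η' x) x) (hη' : Continuous η') :
    InH1 a b η η' :=
  ⟨fun x _ ↦ (hη x).continuousAt.continuousWithinAt,
    (hη'.norm.pow 2).continuousOn.integrableOn_Icc.mono_set Ioo_subset_Icc_self,
    fun x _ y _ ↦ (intervalIntegral.integral_eq_sub_of_hasDerivAt (fun t _ ↦ hη t)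
      (hη'.intervalIntegrable x y)).symm⟩

lemma InH1.add_const_smul (hw : InH1 a b w w') (hw' : MemLp w' 2 (volume.restrict (Ioo a b)))
    (hη : InH1 a b η η') (hη' : MemLp η' 2 (volume.restrict (Ioo a b))) (t : ℝ) :
    InH1 a b (fun x ↦ w x + t • η x) (fun x ↦ w' x + t • η' x) := by
  refine ⟨hw.1.add (hη.1.const_smul t),
    (hw'.add (hη'.const_smul t)).integrable_norm_pow two_ne_zero, fun x hx y hy ↦ ?_⟩
  have hsub {z : ℝ → EuclideanSpace ℝ (Fin n)} (hz : MemLp z 2 (volume.restrict (Ioo a b))) :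
      IntervalIntegrable z volume x y :=
    (intervalIntegrable_of_memLp one_le_two (hx.1.trans hx.2) hz).mono_set
      (uIcc_subset_uIcc (Icc_subset_uIcc hx) (Icc_subset_uIcc hy))
  have hadd := intervalIntegral.integral_add (hsub hw') ((hsub hη').smul t)
  simp only [Pi.smul_apply, intervalIntegral.integral_smul] at hadd
  rw [hadd, ← hw.2.2 x hx y hy, ← hη.2.2 x hx y hy]
  module

/-- `InH1` does not require `w'` to be measurable: if it is not integrable, the Bochner integral
takes the junk value `0`, and this forces `w` to be constant. -/
lemma InH1.eq_left_of_not_intervalIntegrable (hab : a ≤ b) (hw : InH1 a b w w')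
    (hw' : ¬ IntervalIntegrable w' volume a b) : ∀ x ∈ Icc a b, w x = w a := by
  obtain ⟨-, -, hftc⟩ := hw
  have ha : a ∈ Icc a b := left_mem_Icc.2 hab
  have hb : b ∈ Icc a b := right_mem_Icc.2 hab
  have heq {x y : ℝ} (hx : x ∈ Icc a b) (hy : y ∈ Icc a b)
      (hxy : ¬ IntervalIntegrable w' volume x y) : w y = w x := by
    rw [← sub_eq_zero, hftc x hx y hy, intervalIntegral.integral_undef hxy]
  intro x hx
  by_cases hax : IntervalIntegrable w' volume a x
  · exact (heq hx hb fun hxb ↦ hw' (hax.trans hxb)).symm.trans (heq ha hb hw')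
  · exact heq ha hx hax

lemma IsMinimizerEps.ae_deriv_eq_zero_of_forall_eq_left (hε : ε ≠ 0)
    (hf : MemLp f 2 (volume.restrict (Ioo a b))) (hu : IsMinimizerEps lam ε a b f u u')
    (hconst : ∀ x ∈ Icc a b, u x = u a) : ∀ᵐ x ∂volume.restrict (Ioo a b), u' x = 0 := by
  obtain ⟨⟨huc, hu', -⟩, hmin⟩ := hu
  have huf := (memLp_of_continuousOn_Icc huc 2).sub hf
  have hzero : InH1 a b u fun _ ↦ 0 := ⟨huc, by simp, fun x hx y hy ↦ by
    rw [hconst x hx, hconst y hy, sub_self, intervalIntegral.integral_zero]⟩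
  have hle := hmin u _ hzero
  rw [regEnergy_eq_integral_regDensity, regEnergy_eq_integral_regDensity] at hle
  have hgap : ∫ x in Ioo a b, ε ^ 2 / 2 * ‖u' x‖ ^ 2 ≤ 0 := by
    refine le_of_add_le_add_left (le_trans ?_ (hle.trans (add_zero _).ge))
    rw [← integral_add (integrableOn_add_regDensity hε huf hzero.2.1) (hu'.const_mul _)]
    refine integral_mono ((integrableOn_add_regDensity hε huf hzero.2.1).add (hu'.const_mul _))
      (integrableOn_add_regDensity hε huf hu') fun x ↦ ?_
    have hlow := regDensity_add_inner_regFlux_add_le hε 0 (u' x)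
    rw [regFlux_zero, inner_zero_left, add_zero, sub_zero] at hlow
    dsimp only
    linarith
  have hnonneg (x) : 0 ≤ ε ^ 2 / 2 * ‖u' x‖ ^ 2 := by positivity
  have hae := (integral_eq_zero_iff_of_nonneg hnonneg (hu'.const_mul _)).1
    (hgap.antisymm (integral_nonneg hnonneg))
  filter_upwards [hae] with x hx
  simpa [hε] using hx

lemma IsMinimizerEps.memLp_deriv (hab : a ≤ b) (hε : ε ≠ 0)
    (hf : MemLp f 2 (volume.restrict (Ioo a b))) (hu : IsMinimizerEps lam ε a b f u u') :
    MemLp u' 2 (volume.restrict (Ioo a b)) := by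
  by_cases hu' : IntervalIntegrable u' volume a b
  · have hmeas := ((intervalIntegrable_iff_integrableOn_Ioo_of_le hab).1 hu').1
    exact (memLp_two_iff_integrable_sq_norm hmeas).2 hu.1.2.1
  · have hzero := hu.ae_deriv_eq_zero_of_forall_eq_left hε hf
      (hu.1.eq_left_of_not_intervalIntegrable hab hu')
    exact MemLp.zero.ae_eq (EventuallyEq.symm hzero)

lemma regEnergy_add_le (hlam : lam ≠ 0) (hε : ε ≠ 0)
    (hwf : MemLp (fun x ↦ w x - f x) 2 (volume.restrict (Ioo a b)))
    (hw' : MemLp w' 2 (volume.restrict (Ioo a b))) (hη : MemLp η 2 (volume.restrict (Ioo a b)))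
    (hη' : MemLp η' 2 (volume.restrict (Ioo a b))) :
    regEnergy lam ε a b f (fun x ↦ w x + η x) (fun x ↦ w' x + η' x) ≤ regEnergy lam ε a b f w w'
      + (∫ x in Ioo a b, (inner ℝ ((1 / lam) • (w x - f x)) (η x)
          + inner ℝ (regFlux ε (w' x)) (η' x)))
      + ∫ x in Ioo a b, (1 / (2 * lam) * ‖η x‖ ^ 2
          + ((2 * |ε|)⁻¹ + ε ^ 2 / 2) * ‖η' x‖ ^ 2) := by
  have hE := integrableOn_add_regDensity (lam := lam) hε hwf (hw'.integrable_norm_pow two_ne_zero)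
  have hL : IntegrableOn (fun x ↦ inner ℝ ((1 / lam) • (w x - f x)) (η x)
      + inner ℝ (regFlux ε (w' x)) (η' x)) (Ioo a b) :=
    (integrable_inner_of_memLp_two (hwf.const_smul (1 / lam)) hη).add
      (integrable_inner_of_memLp_two (memLp_two_regFlux_comp hε hw') hη')
  have hQ : IntegrableOn (fun x ↦ 1 / (2 * lam) * ‖η x‖ ^ 2
      + ((2 * |ε|)⁻¹ + ε ^ 2 / 2) * ‖η' x‖ ^ 2) (Ioo a b) :=
    ((hη.integrable_norm_pow two_ne_zero).const_mul _).add
      ((hη'.integrable_norm_pow two_ne_zero).const_mul _)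
  have hwfη : MemLp (fun x ↦ w x + η x - f x) 2 (volume.restrict (Ioo a b)) :=
    (hwf.add hη).ae_eq (Eventually.of_forall fun x ↦ sub_add_eq_add_sub _ _ _)
  have hEη := integrableOn_add_regDensity (lam := lam) hε hwfη
    ((hw'.add hη').integrable_norm_pow two_ne_zero)
  rw [regEnergy_eq_integral_regDensity, regEnergy_eq_integral_regDensity, ← integral_add hE hL,
    ← integral_add (hE.fun_add hL) hQ]
  refine integral_mono hEη ((hE.add hL).add hQ) fun x ↦ ?_
  have hfid : 1 / (2 * lam) * ‖w x + η x - f x‖ ^ 2 = 1 / (2 * lam) * ‖w x - f x‖ ^ 2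
      + inner ℝ ((1 / lam) • (w x - f x)) (η x) + 1 / (2 * lam) * ‖η x‖ ^ 2 := by
    rw [← sub_add_eq_add_sub, norm_add_sq_real, real_inner_smul_left]
    field_simp
  have hreg := regDensity_add_le hε (w' x) (η' x)
  dsimp only
  linarith

lemma eq_zero_of_forall_nonneg_mul_add_sq_mul {L Q : ℝ} (h : ∀ t : ℝ, 0 ≤ t * L + t ^ 2 * Q) :
    L = 0 := by
  have hdiscrim := discrim_le_zero (a := Q) (b := L) (c := 0) fun t ↦ by linarith [h t]
  rw [discrim, mul_zero, sub_zero] at hdiscrim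
  exact pow_eq_zero_iff two_ne_zero |>.1 (hdiscrim.antisymm (sq_nonneg L))

lemma IsMinimizerEps.integral_inner_add_inner_eq_zero (hlam : lam ≠ 0) (hε : ε ≠ 0)
    (hf : MemLp f 2 (volume.restrict (Ioo a b))) (hu : IsMinimizerEps lam ε a b f u u')
    (hu' : MemLp u' 2 (volume.restrict (Ioo a b))) (hη : InH1 a b η η')
    (hη' : MemLp η' 2 (volume.restrict (Ioo a b))) :
    ∫ x in Ioo a b, (inner ℝ ((1 / lam) • (u x - f x)) (η x)
      + inner ℝ (regFlux ε (u' x)) (η' x)) = 0 := by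
  have huf := (memLp_of_continuousOn_Icc hu.1.1 2).sub hf
  have hη2 := memLp_of_continuousOn_Icc hη.1 2
  refine eq_zero_of_forall_nonneg_mul_add_sq_mul
    (Q := ∫ x in Ioo a b, (1 / (2 * lam) * ‖η x‖ ^ 2
      + ((2 * |ε|)⁻¹ + ε ^ 2 / 2) * ‖η' x‖ ^ 2)) fun t ↦ ?_
  have hexpand := (hu.2 _ _ (hu.1.add_const_smul hu' hη hη' t)).trans
    (regEnergy_add_le hlam hε huf hu' (hη2.const_smul t) (hη'.const_smul t))
  have hlin : ∫ x in Ioo a b, (inner ℝ ((1 / lam) • (u x - f x)) (t • η x)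
      + inner ℝ (regFlux ε (u' x)) (t • η' x))
      = t * ∫ x in Ioo a b, (inner ℝ ((1 / lam) • (u x - f x)) (η x)
        + inner ℝ (regFlux ε (u' x)) (η' x)) := by
    simp only [real_inner_smul_right, ← mul_add, integral_const_mul]
  have hquad : ∫ x in Ioo a b, (1 / (2 * lam) * ‖t • η x‖ ^ 2
      + ((2 * |ε|)⁻¹ + ε ^ 2 / 2) * ‖t • η' x‖ ^ 2)
      = t ^ 2 * ∫ x in Ioo a b, (1 / (2 * lam) * ‖η x‖ ^ 2
        + ((2 * |ε|)⁻¹ + ε ^ 2 / 2) * ‖η' x‖ ^ 2) := by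
    rw [← integral_const_mul]
    congr with x
    rw [norm_smul, norm_smul, mul_pow, mul_pow, Real.norm_eq_abs, sq_abs]
    ring
  rw [hlin, hquad] at hexpand
  linarith

lemma IsMinimizerEps.integral_smul_add_deriv_smul_eq_zero (hab : a ≤ b) (hlam : lam ≠ 0)
    (hε : ε ≠ 0) (hf : MemLp f 2 (volume.restrict (Ioo a b)))
    (hu : IsMinimizerEps lam ε a b f u u') (hu' : MemLp u' 2 (volume.restrict (Ioo a b)))
    {φ φ' : ℝ → ℝ} (hφ : ∀ x, HasDerivAt φ (φ' x) x) (hφ' : Continuous φ') :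
    ∫ x in a..b, (φ x • (1 / lam) • (u x - f x) + φ' x • regFlux ε (u' x)) = 0 := by
  have hφc : Continuous φ := continuous_iff_continuousAt.2 fun x ↦ (hφ x).continuousAt
  have hk := (intervalIntegrable_of_memLp one_le_two hab
    ((memLp_of_continuousOn_Icc hu.1.1 2).sub hf)).smul (1 / lam)
  have hF := intervalIntegrable_of_memLp one_le_two hab (memLp_two_regFlux_comp hε hu')
  have hint := (hk.continuousOn_smul hφc.continuousOn).add (hF.continuousOn_smul hφ'.continuousOn)
  refine ext_inner_left ℝ fun e ↦ ?_
  have hφ'e : Continuous fun x ↦ φ' x • e := by fun_prop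
  have hweak := hu.integral_inner_add_inner_eq_zero hlam hε hf hu'
    (InH1.of_hasDerivAt (fun x ↦ (hφ x).smul_const e) hφ'e)
    (memLp_of_continuousOn_Icc hφ'e.continuousOn 2)
  rw [inner_zero_right, ← hweak, intervalIntegral.integral_of_le hab, integral_Ioc_eq_integral_Ioo]
  refine (integral_inner ((intervalIntegrable_iff_integrableOn_Ioo_of_le hab).1 hint) e).symm.trans
    (setIntegral_congr_fun measurableSet_Ioo fun x _ ↦ ?_)
  simp only [Pi.smul_apply, Pi.sub_apply, inner_add_right, real_inner_smul_right, real_inner_comm e]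

end Energy

theorem minimizerEps_strong_solution_eulerLagrange_general
    {n : ℕ} {a b : ℝ} (hab : a ≤ b) {lam : ℝ} (hlam : lam ≠ 0) {ε : ℝ} (hε : ε ≠ 0)
    {f u u' : ℝ → EuclideanSpace ℝ (Fin n)} (hf : MemLp f 2 (volume.restrict (Ioo a b)))
    (hu : IsMinimizerEps lam ε a b f u u') :
    ∃ v v'' h : ℝ → EuclideanSpace ℝ (Fin n),
      (∀ᵐ x ∂volume.restrict (Ioo a b), v x = u' x) ∧
      IntegrableOn v'' (Icc a b) ∧
      (∀ x ∈ Icc a b, ∀ y ∈ Icc a b, v y - v x = ∫ t in x..y, v'' t) ∧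
      v a = 0 ∧ v b = 0 ∧
      IntegrableOn h (Icc a b) ∧
      (∀ x ∈ Icc a b, ∀ y ∈ Icc a b,
        regFlux ε (v y) - regFlux ε (v x) = ∫ t in x..y, h t) ∧
      (∀ᵐ x ∂volume.restrict (Ioo a b), h x = (1 / lam) • (u x - f x)) := by
  let h : ℝ → EuclideanSpace ℝ (Fin n) := fun x ↦ (1 / lam) • (u x - f x)
  have hu' := hu.memLp_deriv hab hε hf
  have hh : IntervalIntegrable h volume a b := intervalIntegrable_of_memLp one_le_two hab
    (((memLp_of_continuousOn_Icc hu.1.1 2).sub hf).const_smul (1 / lam))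
  obtain ⟨hhb, hflux⟩ := du_bois_reymond hab hh
    (intervalIntegrable_of_memLp one_le_two hab (memLp_two_regFlux_comp hε hu'))
    fun φ φ' hφ hφ' ↦ hu.integral_smul_add_deriv_smul_eq_zero hab hlam hε hf hu' hφ hφ'
  let v : ℝ → EuclideanSpace ℝ (Fin n) := fun x ↦ (regFluxEquiv _ hε).symm (∫ t in a..x, h t)
  have hv : AbsolutelyContinuousOnInterval v a b :=
    absolutelyContinuousOnInterval_lipschitzWith_comp (lipschitzWith_regFluxEquiv_symm hε)
      (absolutelyContinuousOnInterval_primitive hh)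
  have hvzero {x} (hx : ∫ t in a..x, h t = 0) : v x = 0 := by
    simp only [v, hx, regFluxEquiv_symm_zero]
  refine ⟨v, deriv v, h, hflux.mono fun x hx ↦ ?_, ?_, fun x hx y hy ↦ ?_,
    hvzero intervalIntegral.integral_same, hvzero hhb, ?_, fun x hx y hy ↦ ?_,
    Eventually.of_forall fun _ ↦ rfl⟩
  · simp only [v, ← hx, regFluxEquiv_symm_regFlux]
  · exact (intervalIntegrable_iff_integrableOn_Icc_of_le hab).1
      (intervalIntegrable_deriv_of_absolutelyContinuousOnInterval hv)
  · exact (integral_deriv_eq_sub_of_absolutelyContinuousOnInterval (hv.mono (uIcc_subset_uIcc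
      (Icc_subset_uIcc hx) (Icc_subset_uIcc hy)))).symm
  · exact (intervalIntegrable_iff_integrableOn_Icc_of_le hab).1 hh
  · have hint {z} (hz : z ∈ Icc a b) := hh.mono_set (uIcc_subset_uIcc_left (Icc_subset_uIcc hz))
    simp only [v, regFlux_regFluxEquiv_symm]
    exact intervalIntegral.integral_interval_sub_left (hint hy) (hint hx)

/-- the minimizer of `E_ε` is a strong solution of the Euler–Lagrange system
`(1/λ)(u − f) = (u'/|u'|_ε)' + ε² u''` on `I` with Neumann boundary conditions
`u'(a) = u'(b) = 0`: `u'` has an absolutely continuous representative `v` vanishing at the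
endpoints, the field `x ↦ v(x)/|v(x)|_ε + ε² v(x)` is absolutely continuous on `[a,b]`, and
its derivative equals `(1/λ)(u − f)` a.e. on `I`. -/
theorem minimizerEps_strong_solution_eulerLagrange
    {n : ℕ} (hn : 1 ≤ n) (a b : ℝ) (hab : a < b) (lam : ℝ) (hlam : 0 < lam)
    (ε : ℝ) (hε : 0 < ε)
    (f f' : ℝ → EuclideanSpace ℝ (Fin n)) (hf : InH1 a b f f')
    (u u' : ℝ → EuclideanSpace ℝ (Fin n)) (hu : IsMinimizerEps lam ε a b f u u') :
    ∃ v v'' h : ℝ → EuclideanSpace ℝ (Fin n),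
      -- `v` is an a.e. representative of `u'` on `I`
      (∀ᵐ x ∂(MeasureTheory.volume.restrict (Set.Ioo a b)), v x = u' x) ∧
      -- `v` is absolutely continuous on `[a,b]` with derivative `v''`
      MeasureTheory.IntegrableOn v'' (Set.Icc a b) ∧
      (∀ x ∈ Set.Icc a b, ∀ y ∈ Set.Icc a b, v y - v x = ∫ t in x..y, v'' t) ∧
      -- Neumann boundary conditions
      v a = 0 ∧ v b = 0 ∧
      -- the field `v/|v|_ε + ε² v` is absolutely continuous on `[a,b]` with derivative `h`
      MeasureTheory.IntegrableOn h (Set.Icc a b) ∧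
      (∀ x ∈ Set.Icc a b, ∀ y ∈ Set.Icc a b,
        ((Real.sqrt (‖v y‖ ^ 2 + ε ^ 2))⁻¹ • v y + ε ^ 2 • v y)
          - ((Real.sqrt (‖v x‖ ^ 2 + ε ^ 2))⁻¹ • v x + ε ^ 2 • v x) = ∫ t in x..y, h t) ∧
      -- the Euler–Lagrange equation holds a.e. on `I`
      (∀ᵐ x ∂(MeasureTheory.volume.restrict (Set.Ioo a b)),
        h x = (1 / lam) • (u x - f x)) :=
  minimizerEps_strong_solution_eulerLagrange_general hab.le hlam.ne' hε.ne'
    (memLp_of_continuousOn_Icc hf.1 2) hu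
end
end
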